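/- arXiv:2210.07868 — 3 statements merged into one kernel-verified Lean document; each statement's English description precedes it below -/
import Mathlib

section
/- Let γ₁, γ₂ : [0,1] → ℝ² be absolutely continuous curves with γ₁(0) = γ₂(0) = 0, and let γ : [0,1] → ℝ² be their concatenation, defined by γ(t) = γ₁(2t) for t ≤ 1/2 and γ(t) = γ₁(1) + γ₂(2t−1) for t ≥ 1/2. Then γ(1) = γ₁(1) + γ₂(1) and A(γ) = A(γ₁) + A(γ₂) + (1/2)·det(γ₁(1), γ₂(1)), where det((a,b),(c,d)) = ad − bc. -/
/-!
By Lebesgue differentiation, the `deriv` field of a curve is a.e. its true derivative, so it is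
determined by `toFun`. Hence on each half of `[0,1]` the derivative of the concatenation `γ` is,
a.e., twice that of the corresponding piece (`ACCurve.ae_deriv_eq`). Split the area integral at `1/2`
and rescale each half to `[0,1]`: the first half gives `2 A(γ₁)`. The second gives
`∫ det(γ₁(1) + γ₂, γ₂') = 2 A(γ₂) + det(γ₁(1), ∫ γ₂')`, and `∫ γ₂' = γ₂(1)`. Both halves are
instances of `ACCurve.integral_piece`.
-/

open MeasureTheory

/-- An absolutely continuous curve `[0,1] → ℝ²`, encoded by a function together with an
(interval-integrable) derivative whose integral recovers the function on `[0,1]`. -/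
structure ACCurve where
  toFun : ℝ → ℝ × ℝ
  deriv : ℝ → ℝ × ℝ
  integrable : IntervalIntegrable deriv volume 0 1
  integral_eq : ∀ t ∈ Set.Icc (0:ℝ) 1,
    toFun t = toFun 0 + ∫ s in (0:ℝ)..t, deriv s

/-- The balayage (signed) area `A(γ) = (1/2)∫₀¹ (γ₁ γ₂' − γ₂ γ₁')`. -/
noncomputable def ACCurve.area (γ : ACCurve) : ℝ :=
  (1/2) * ∫ t in (0:ℝ)..1,
    ((γ.toFun t).1 * (γ.deriv t).2 - (γ.toFun t).2 * (γ.deriv t).1)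

/-- Lebesgue differentiation: almost everywhere on `(0,1)`, the field `deriv` is the genuine
derivative of the curve, hence it is determined a.e. by `toFun`. -/
lemma ACCurve.ae_hasDerivAt (γ : ACCurve) :
    ∀ᵐ t : ℝ, t ∈ Set.Ioo (0:ℝ) 1 → HasDerivAt γ.toFun (γ.deriv t) t := by
  filter_upwards [γ.integrable.ae_hasDerivAt_integral] with t ht hmem
  have h := (ht (by rw [Set.uIcc_of_le zero_le_one]; exact Set.Ioo_subset_Icc_self hmem) 0
    (by simp)).const_add (γ.toFun 0)
  refine h.congr_of_eventuallyEq ?_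
  filter_upwards [Ioo_mem_nhds hmem.1 hmem.2] with s hs
  exact γ.integral_eq s (Set.Ioo_subset_Icc_self hs)

lemma ACCurve.continuousOn (γ : ACCurve) : ContinuousOn γ.toFun (Set.uIcc 0 1) := by
  have h : ContinuousOn (fun t => γ.toFun 0 + ∫ s in (0:ℝ)..t, γ.deriv s) (Set.uIcc 0 1) :=
    continuousOn_const.add
      (intervalIntegral.continuousOn_primitive_interval' γ.integrable (by simp))
  refine h.congr fun t ht => ?_
  rw [Set.uIcc_of_le zero_le_one] at ht
  exact γ.integral_eq t ht

lemma ACCurve.intervalIntegrable_deriv_fst (γ : ACCurve) :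
    IntervalIntegrable (fun t => (γ.deriv t).1) volume 0 1 :=
  ⟨γ.integrable.1.fst, γ.integrable.2.fst⟩

lemma ACCurve.intervalIntegrable_deriv_snd (γ : ACCurve) :
    IntervalIntegrable (fun t => (γ.deriv t).2) volume 0 1 :=
  ⟨γ.integrable.1.snd, γ.integrable.2.snd⟩

lemma ACCurve.intervalIntegrable_area (γ : ACCurve) :
    IntervalIntegrable
      (fun t => (γ.toFun t).1 * (γ.deriv t).2 - (γ.toFun t).2 * (γ.deriv t).1) volume 0 1 :=
  (γ.intervalIntegrable_deriv_snd.continuousOn_mul γ.continuousOn.fst).sub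
    (γ.intervalIntegrable_deriv_fst.continuousOn_mul γ.continuousOn.snd)

lemma ACCurve.integral_deriv_fst (γ : ACCurve) (h₀ : γ.toFun 0 = 0) :
    ∫ t in (0:ℝ)..1, (γ.deriv t).1 = (γ.toFun 1).1 := by
  rw [γ.integral_eq 1 (by simp), h₀, zero_add]
  exact (ContinuousLinearMap.fst ℝ ℝ ℝ).intervalIntegral_comp_comm γ.integrable

lemma ACCurve.integral_deriv_snd (γ : ACCurve) (h₀ : γ.toFun 0 = 0) :
    ∫ t in (0:ℝ)..1, (γ.deriv t).2 = (γ.toFun 1).2 := by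
  rw [γ.integral_eq 1 (by simp), h₀, zero_add]
  exact (ContinuousLinearMap.snd ℝ ℝ ℝ).intervalIntegral_comp_comm γ.integrable

/-- The affine change of variable `t ↦ 2 * t - c` pulls null sets back to null sets. -/
lemma ae_comp_two_mul_sub {p : ℝ → Prop} (c : ℝ) (h : ∀ᵐ t, p t) : ∀ᵐ t, p (2 * t - c) := by
  have h₁ : ∀ᵐ t, p (t - c) :=
    (measurePreserving_sub_right volume c).quasiMeasurePreserving.ae h
  have h₂ : Measure.QuasiMeasurePreserving (fun t : ℝ => 2 * t) volume volume := by
    refine ⟨measurable_const_mul 2, ?_⟩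
    rw [Real.map_volume_mul_left two_ne_zero]
    exact Measure.smul_absolutelyContinuous
  exact h₂.ae h₁

/-- Chain rule: on a piece where `γ` is a translate of `δ` run at double speed, the derivative
fields correspond almost everywhere. -/
lemma ACCurve.ae_deriv_eq (γ δ : ACCurve) (c : ℝ) (v : ℝ × ℝ)
    (h : ∀ t, 2 * t - c ∈ Set.Ioo (0:ℝ) 1 →
      t ∈ Set.Ioo (0:ℝ) 1 ∧ γ.toFun t = v + δ.toFun (2 * t - c)) :
    ∀ᵐ t : ℝ, 2 * t - c ∈ Set.Ioo (0:ℝ) 1 → γ.deriv t = (2:ℝ) • δ.deriv (2 * t - c) := by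
  filter_upwards [γ.ae_hasDerivAt, ae_comp_two_mul_sub c δ.ae_hasDerivAt] with t hγ hδ ht
  have haff : HasDerivAt (fun t : ℝ => 2 * t - c) 2 t := by
    simpa using ((hasDerivAt_id t).const_mul 2).sub_const c
  have hcomp := ((hδ ht).scomp t haff).const_add v
  refine (hγ (h t ht).1).unique (hcomp.congr_of_eventuallyEq ?_)
  have hopen : IsOpen {t : ℝ | 2 * t - c ∈ Set.Ioo (0:ℝ) 1} :=
    isOpen_Ioo.preimage (by fun_prop)
  filter_upwards [hopen.mem_nhds ht] with s hs
  exact (h s hs).2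

/-- Contribution to the area integral of a piece on which `γ` is the translate by `v` of `δ` run
at double speed: the reparametrization has no effect, and the translation adds `det(v, δ(1))`. -/
lemma ACCurve.integral_piece (γ δ : ACCurve) (c : ℝ) (v : ℝ × ℝ) (h₀ : δ.toFun 0 = 0)
    (h : ∀ t, 2 * t - c ∈ Set.Ioo (0:ℝ) 1 →
      t ∈ Set.Ioo (0:ℝ) 1 ∧ γ.toFun t = v + δ.toFun (2 * t - c)) :
    ∫ t in (c / 2)..((c + 1) / 2),
        ((γ.toFun t).1 * (γ.deriv t).2 - (γ.toFun t).2 * (γ.deriv t).1) =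
      2 * δ.area + (v.1 * (δ.toFun 1).2 - v.2 * (δ.toFun 1).1) := by
  let G : ℝ → ℝ := fun s =>
    ((δ.toFun s).1 * (δ.deriv s).2 - (δ.toFun s).2 * (δ.deriv s).1) +
      (v.1 * (δ.deriv s).2 - v.2 * (δ.deriv s).1)
  have hle : c / 2 ≤ (c + 1) / 2 := by linarith
  have hcongr : ∫ t in (c / 2)..((c + 1) / 2),
        ((γ.toFun t).1 * (γ.deriv t).2 - (γ.toFun t).2 * (γ.deriv t).1) =
      ∫ t in (c / 2)..((c + 1) / 2), 2 * G (2 * t - c) := by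
    -- The identities for `γ` hold only on the open interval, so the endpoint is dropped first.
    rw [intervalIntegral.integral_of_le hle, intervalIntegral.integral_of_le hle,
      integral_Ioc_eq_integral_Ioo, integral_Ioc_eq_integral_Ioo]
    refine setIntegral_congr_ae measurableSet_Ioo ?_
    filter_upwards [γ.ae_deriv_eq δ c v h] with t ht hmem
    have hm : 2 * t - c ∈ Set.Ioo (0:ℝ) 1 :=
      ⟨by linarith [hmem.1], by linarith [hmem.2]⟩
    rw [ht hm, (h t hm).2]
    simp only [G, Prod.fst_add, Prod.snd_add, Prod.smul_fst, Prod.smul_snd, smul_eq_mul]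
    ring
  have hG : ∫ s in (0:ℝ)..1, G s =
      2 * δ.area + (v.1 * (δ.toFun 1).2 - v.2 * (δ.toFun 1).1) := by
    have i₁ := δ.intervalIntegrable_deriv_fst.const_mul v.2
    have i₂ := δ.intervalIntegrable_deriv_snd.const_mul v.1
    simp only [G]
    rw [intervalIntegral.integral_add δ.intervalIntegrable_area (i₂.sub i₁),
      intervalIntegral.integral_sub i₂ i₁, intervalIntegral.integral_const_mul,
      intervalIntegral.integral_const_mul, δ.integral_deriv_fst h₀, δ.integral_deriv_snd h₀,
      ACCurve.area]
    ring
  rw [hcongr, intervalIntegral.integral_const_mul,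
    intervalIntegral.integral_comp_mul_sub G two_ne_zero c, ← hG,
    show 2 * (c / 2) - c = 0 by ring, show 2 * ((c + 1) / 2) - c = 1 by ring, smul_eq_mul]
  ring

/-- Concatenation of curves: `γ(1) = γ₁(1) + γ₂(1)` and
`A(γ) = A(γ₁) + A(γ₂) + (1/2)·det(γ₁(1), γ₂(1))`. -/
theorem concat_endpoint_and_area (γ₁ γ₂ γ : ACCurve)
    (h₁ : γ₁.toFun 0 = 0) (h₂ : γ₂.toFun 0 = 0)
    (hconc : ∀ t ∈ Set.Icc (0:ℝ) 1,
      γ.toFun t = if t ≤ 1/2 then γ₁.toFun (2*t) else γ₁.toFun 1 + γ₂.toFun (2*t - 1)) :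
    γ.toFun 1 = γ₁.toFun 1 + γ₂.toFun 1 ∧
    γ.area = γ₁.area + γ₂.area +
      (1/2) * ((γ₁.toFun 1).1 * (γ₂.toFun 1).2 - (γ₁.toFun 1).2 * (γ₂.toFun 1).1) := by
  have hend : γ.toFun 1 = γ₁.toFun 1 + γ₂.toFun 1 := by
    rw [hconc 1 (by simp), if_neg (by norm_num)]
    norm_num
  have p₁ := γ.integral_piece γ₁ 0 0 h₁ (by
    rintro t ⟨ha, hb⟩
    have ht : t ∈ Set.Ioo (0:ℝ) 1 := ⟨by linarith, by linarith⟩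
    refine ⟨ht, ?_⟩
    rw [hconc t (Set.Ioo_subset_Icc_self ht), if_pos (by linarith), sub_zero, zero_add])
  have p₂ := γ.integral_piece γ₂ 1 (γ₁.toFun 1) h₂ (by
    rintro t ⟨ha, hb⟩
    have ht : t ∈ Set.Ioo (0:ℝ) 1 := ⟨by linarith, by linarith⟩
    refine ⟨ht, ?_⟩
    rw [hconc t (Set.Ioo_subset_Icc_self ht), if_neg (by linarith)])
  refine ⟨hend, ?_⟩
  norm_num at p₁ p₂
  have hi := γ.intervalIntegrable_area
  have hsplit := intervalIntegral.integral_add_adjacent_intervals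
    (hi.mono_set (c := 0) (d := 1 / 2) (by
      rw [Set.uIcc_of_le (by norm_num), Set.uIcc_of_le (by norm_num)]
      exact Set.Icc_subset_Icc le_rfl (by norm_num)))
    (hi.mono_set (c := 1 / 2) (d := 1) (by
      rw [Set.uIcc_of_le (by norm_num), Set.uIcc_of_le (by norm_num)]
      exact Set.Icc_subset_Icc (by norm_num) le_rfl))
  rw [ACCurve.area, ← hsplit, p₁, p₂]
  ring
end

section
/- (Busemann's isoperimetric inequality in Minkowski planes.) Let L ⊂ ℝ² be a compact convex set with L = −L and 0 in its interior. Then every closed absolutely continuous curve γ : [0,1] → ℝ² (i.e., with γ(0) = γ(1)) satisfies (‖γ‖_L)² ≥ 4 · vol(L*) · |A(γ)|. -/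
/-! The proof adapts E. Schmidt's proof of the isoperimetric inequality, with the polar body
`K = L*` in the role of the disc. Write `γ = (x, y)`. The curve is enclosed by two touching
horizontal lines; after a translation in `y` and a scaling of `K` by a factor `r`, the projection
of `γ` to the second axis and the projection of `r K` to the first axis are the same interval.
Each `γ(t)` is paired with a point `P(t)` on the boundary of `r K` whose first coordinate is
`± y(t)`, taken on the upper boundary while the curve travels from the lowest to the highest point
and on the lower boundary while it travels back. Since `⟨P, γ'⟩ ≤ r ‖γ'‖_L`, integrating gives
`|A(γ)| + r² vol(K) ≤ r ‖γ‖_L` (`schmidt_inequality`): the term `∫ P₁ x'` is the area, and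
`∫ P₂ y'` is a change of variables producing the area between the two boundary branches
(`exists_branch`). The AM-GM inequality then gives `4 vol(K) |A(γ)| ≤ ‖γ‖_L²`
(`busemann_aux`).

The boundary functions of `K` are concave, so their continuity is immediate only in the interior of
the projection of `K`. The argument is therefore carried out with the part of `K` over a slightly
smaller interval, which contains `θ K` for `θ < 1` (`exists_profile`), and `θ → 1` at the end. -/

open MeasureTheory

/-- The `L`-length `‖γ‖_L = ∫₀¹ ‖γ'(t)‖_L dt`, where `‖·‖_L` is the gauge of `L`. -/
noncomputable def ACCurve.length (L : Set (ℝ × ℝ)) (γ : ACCurve) : ℝ :=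
  ∫ t in (0:ℝ)..1, gauge L (γ.deriv t)

/-- The polar dual `L* = {x | ∀ y ∈ L, ⟨x,y⟩ ≤ 1}`. -/
def polarDual (L : Set (ℝ × ℝ)) : Set (ℝ × ℝ) :=
  { x | ∀ y ∈ L, x.1 * y.1 + x.2 * y.2 ≤ 1 }

/-! ### Absolutely continuous loops -/

lemma LipschitzWith.comp_absolutelyContinuousOnInterval {F u : ℝ → ℝ} {C : NNReal} {a b : ℝ}
    (hF : LipschitzWith C F) (hu : AbsolutelyContinuousOnInterval u a b) :
    AbsolutelyContinuousOnInterval (fun t => F (u t)) a b := by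
  unfold AbsolutelyContinuousOnInterval at hu ⊢
  have h := hu.const_mul (C : ℝ)
  rw [mul_zero] at h
  refine squeeze_zero (fun E => Finset.sum_nonneg fun i _ => dist_nonneg) (fun E => ?_) h
  rw [Finset.mul_sum]
  exact Finset.sum_le_sum fun i _ => hF.dist_le_mul _ _

/-- Change of variables along an absolutely continuous function `u`, which need not be
monotone: a primitive of `k` composed with `u` is again absolutely continuous. -/
lemma integral_comp_mul_deriv_of_ac {u u' k : ℝ → ℝ} {a b M : ℝ}
    (hu : AbsolutelyContinuousOnInterval u a b)
    (hu' : ∀ᵐ t, t ∈ Set.uIcc a b → HasDerivAt u (u' t) t)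
    (hk : Continuous k) (hM : ∀ v, |k v| ≤ M) :
    ∫ t in a..b, k (u t) * u' t = ∫ v in (u a)..(u b), k v := by
  have hd : ∀ v, HasDerivAt (fun w => ∫ z in (0:ℝ)..w, k z) (k v) v := fun v =>
    intervalIntegral.integral_hasDerivAt_right (hk.intervalIntegrable _ _)
      hk.aestronglyMeasurable.stronglyMeasurableAtFilter hk.continuousAt
  have hM0 : 0 ≤ M := (abs_nonneg _).trans (hM 0)
  have hL : LipschitzWith ⟨M, hM0⟩ (fun w => ∫ z in (0:ℝ)..w, k z) :=
    lipschitzWith_of_nnnorm_deriv_le (fun v => (hd v).differentiableAt) (fun v => by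
      rw [(hd v).deriv]; exact hM v)
  have h := (hL.comp_absolutelyContinuousOnInterval hu).integral_deriv_eq_sub
  rw [intervalIntegral.integral_interval_sub_left (hk.intervalIntegrable _ _)
    (hk.intervalIntegrable _ _)] at h
  rw [← h]
  refine intervalIntegral.integral_congr_ae ?_
  filter_upwards [hu'] with t ht hmem
  have := (hd (u t)).comp t (ht (Set.uIoc_subset_uIcc hmem))
  exact this.deriv.symm

/-- The case `a ≤ b` of `exists_branch`: use `kin` on `(a, b]` and `kout` on the rest of the loop.
Since `u 0 = u 1`, the integral of `kout (u t) * u' t` over the whole loop vanishes, so only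
the difference `kin - kout` over `(a, b]` contributes. -/
lemma exists_branch_aux {u u' kin kout : ℝ → ℝ} {a b M : ℝ}
    (ha : 0 ≤ a) (hab : a ≤ b) (hb : b ≤ 1)
    (hu : AbsolutelyContinuousOnInterval u 0 1)
    (hint : IntervalIntegrable u' volume 0 1)
    (hu' : ∀ᵐ t, t ∈ Set.uIcc (0:ℝ) 1 → HasDerivAt u (u' t) t) (hcl : u 0 = u 1)
    (hin : Continuous kin) (hout : Continuous kout)
    (hMin : ∀ v, |kin v| ≤ M) (hMout : ∀ v, |kout v| ≤ M) :
    ∃ κ : ℝ → ℝ, (∀ t, κ t = kin (u t) ∨ κ t = kout (u t)) ∧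
      IntervalIntegrable (fun t => κ t * u' t) volume 0 1 ∧
      ∫ t in (0:ℝ)..1, κ t * u' t = ∫ v in (u a)..(u b), (kin v - kout v) := by
  classical
  have hsub : Set.uIcc a b ⊆ Set.uIcc (0:ℝ) 1 := by
    rw [Set.uIcc_of_le hab, Set.uIcc_of_le zero_le_one]
    exact Set.Icc_subset_Icc ha hb
  have hsub' : Set.Ioc a b ⊆ Set.Ioc (0:ℝ) 1 := Set.Ioc_subset_Ioc ha hb
  have i1 : IntervalIntegrable (fun t => kout (u t) * u' t) volume 0 1 :=
    hint.continuousOn_mul (hout.comp_continuousOn hu.continuousOn)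
  have i2 : IntervalIntegrable (fun t => (kin (u t) - kout (u t)) * u' t) volume 0 1 :=
    hint.continuousOn_mul ((hin.sub hout).comp_continuousOn hu.continuousOn)
  have i3 : IntervalIntegrable
      ((Set.Ioc a b).indicator fun t => (kin (u t) - kout (u t)) * u' t) volume 0 1 := by
    rw [intervalIntegrable_iff] at i2 ⊢
    exact i2.indicator measurableSet_Ioc
  have e1 : ∫ t in (0:ℝ)..1, kout (u t) * u' t = 0 := by
    rw [integral_comp_mul_deriv_of_ac hu hu' hout hMout, hcl, intervalIntegral.integral_same]
  have e2 : ∫ t in (0:ℝ)..1,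
      (Set.Ioc a b).indicator (fun t => (kin (u t) - kout (u t)) * u' t) t =
      ∫ v in (u a)..(u b), (kin v - kout v) := by
    rw [intervalIntegral.integral_of_le zero_le_one, integral_indicator measurableSet_Ioc,
      Measure.restrict_restrict measurableSet_Ioc, Set.inter_eq_left.2 hsub',
      ← intervalIntegral.integral_of_le hab]
    exact integral_comp_mul_deriv_of_ac (k := fun v => kin v - kout v) (M := M + M) (hu.mono hsub)
      (hu'.mono fun t ht hm => ht (hsub hm)) (hin.sub hout)
      (fun v => (abs_sub _ _).trans (add_le_add (hMin v) (hMout v)))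
  have key : (fun t => (if t ∈ Set.Ioc a b then kin (u t) else kout (u t)) * u' t) =
      fun t => kout (u t) * u' t +
        (Set.Ioc a b).indicator (fun t => (kin (u t) - kout (u t)) * u' t) t := by
    funext t
    by_cases ht : t ∈ Set.Ioc a b
    · rw [if_pos ht, Set.indicator_of_mem ht]; ring
    · rw [if_neg ht, Set.indicator_of_notMem ht]; ring
  refine ⟨fun t => if t ∈ Set.Ioc a b then kin (u t) else kout (u t), fun t => ?_, ?_, ?_⟩
  · by_cases ht : t ∈ Set.Ioc a b
    · exact Or.inl (if_pos ht)
    · exact Or.inr (if_neg ht)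
  · rw [key]; exact i1.add i3
  · rw [key, intervalIntegral.integral_add i1 i3, e1, e2, zero_add]

/-- Along a closed loop `u`, use `k₁` on the way from `t₀` to `t₁` and `k₂` on the way back.
The resulting integral is that of `k₁ - k₂` between `u t₀` and `u t₁`, whichever of `t₀`, `t₁`
comes first in the parametrization. -/
lemma exists_branch {u u' k₁ k₂ : ℝ → ℝ} {t₀ t₁ M : ℝ}
    (ht₀ : t₀ ∈ Set.Icc (0:ℝ) 1) (ht₁ : t₁ ∈ Set.Icc (0:ℝ) 1)
    (hu : AbsolutelyContinuousOnInterval u 0 1)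
    (hint : IntervalIntegrable u' volume 0 1)
    (hu' : ∀ᵐ t, t ∈ Set.uIcc (0:ℝ) 1 → HasDerivAt u (u' t) t) (hcl : u 0 = u 1)
    (h₁ : Continuous k₁) (h₂ : Continuous k₂)
    (hM₁ : ∀ v, |k₁ v| ≤ M) (hM₂ : ∀ v, |k₂ v| ≤ M) :
    ∃ κ : ℝ → ℝ, (∀ t, κ t = k₁ (u t) ∨ κ t = k₂ (u t)) ∧
      IntervalIntegrable (fun t => κ t * u' t) volume 0 1 ∧
      ∫ t in (0:ℝ)..1, κ t * u' t = ∫ v in (u t₀)..(u t₁), (k₁ v - k₂ v) := by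
  rcases le_total t₀ t₁ with h | h
  · exact exists_branch_aux ht₀.1 h ht₁.2 hu hint hu' hcl h₁ h₂ hM₁ hM₂
  · obtain ⟨κ, hκ, hi, he⟩ := exists_branch_aux ht₁.1 h ht₀.2 hu hint hu' hcl h₂ h₁ hM₂ hM₁
    refine ⟨κ, fun t => (hκ t).symm, hi, ?_⟩
    rw [he, intervalIntegral.integral_symm, ← intervalIntegral.integral_neg]
    simp only [neg_sub]

/-! ### The boundary of a symmetric convex body -/

open scoped Pointwise in
/-- The upper boundary of a centrally symmetric convex body `K`, as a function `G` on an interval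
`[-β, β]`. The lower boundary is then `v ↦ -G (-v)`, so `2 ∫ G` is the area of the part of `K`
over `[-β, β]`. For `θ < 1` this interval is taken to be `θ` times the projection of `K` to the
first axis; there the boundary function, being concave, is continuous, and the part of `K` over
the interval still contains `θ • K`. -/
lemma exists_profile {K : Set (ℝ × ℝ)} (hK : IsCompact K) (hc : Convex ℝ K)
    (hs : ∀ p ∈ K, -p ∈ K) (hn : ∃ c > 0, ((c, 0) : ℝ × ℝ) ∈ K)
    {θ : ℝ} (hθ0 : 0 < θ) (hθ1 : θ < 1) :
    ∃ β > 0, ∃ G : ℝ → ℝ, Continuous G ∧ (∃ M, ∀ u, |G u| ≤ M) ∧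
      (∀ u, |u| ≤ β → (u, G u) ∈ K) ∧
      θ ^ 2 * (volume K).toReal ≤ 2 * ∫ u in (-β)..β, G u := by
  obtain ⟨c, hc0, hcK⟩ := hn
  obtain ⟨q, hqK, hq⟩ := hK.exists_isMaxOn ⟨_, hcK⟩ continuous_fst.continuousOn
  have h0K : (0 : ℝ × ℝ) ∈ K := by
    have := hc hqK (hs q hqK) (a := 1/2) (b := 1/2) (by norm_num) (by norm_num) (by norm_num)
    simpa using this
  set b := q.1 with hb
  have hb0 : 0 < b := lt_of_lt_of_le hc0 (hq hcK)
  have hle : ∀ p ∈ K, |p.1| ≤ b := fun p hp =>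
    abs_le.2 ⟨by have := hq (hs p hp); simp at this; linarith, hq hp⟩
  have hsm : ∀ r : ℝ, |r| ≤ 1 → ∀ p ∈ K, r • p ∈ K := by
    intro r hr p hp
    obtain ⟨h1, h2⟩ := abs_le.1 hr
    have := hc hp (hs p hp) (a := (1 + r)/2) (b := (1 - r)/2) (by linarith) (by linarith) (by ring)
    convert this using 1
    rw [smul_neg, ← sub_eq_add_neg, ← sub_smul]; congr 1; ring
  have hne : ∀ u, |u| ≤ b → {p | (u, p) ∈ K}.Nonempty := by
    intro u hu
    refine ⟨(u / b) * q.2, ?_⟩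
    have := hsm (u / b) (by rw [abs_div, abs_of_pos hb0]; exact div_le_one_of_le₀ hu hb0.le) q hqK
    have he : (u / b) • q = (u, (u / b) * q.2) :=
      Prod.ext (div_mul_cancel₀ u hb0.ne') rfl
    rwa [he] at this
  have hcpt : ∀ u, IsCompact {p | (u, p) ∈ K} := by
    intro u
    have : {p : ℝ | (u, p) ∈ K} = Prod.snd '' (K ∩ {z | z.1 = u}) := by
      ext p; constructor
      · intro h; exact ⟨(u, p), ⟨h, rfl⟩, rfl⟩
      · rintro ⟨⟨z1, z2⟩, ⟨h1, h2⟩, h3⟩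
        simp only [Set.mem_ofPred_eq] at h2 h3 ⊢
        subst h2 h3; exact h1
    rw [this]
    exact (hK.inter_right (isClosed_eq continuous_fst continuous_const)).image continuous_snd
  set g : ℝ → ℝ := fun u => sSup {p | (u, p) ∈ K} with hg
  have hgmem : ∀ u, |u| ≤ b → (u, g u) ∈ K := fun u hu => (hcpt u).sSup_mem (hne u hu)
  have hgle : ∀ u p, (u, p) ∈ K → p ≤ g u := fun u p hp => le_csSup (hcpt u).bddAbove hp
  have hconc : ConcaveOn ℝ (Set.Icc (-b) b) g := by
    refine ⟨convex_Icc _ _, fun x hx y hy r s hr hs' hrs => hgle _ _ ?_⟩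
    exact hc (hgmem x (abs_le.2 hx)) (hgmem y (abs_le.2 hy)) hr hs' hrs
  have hcont : ContinuousOn g (Set.Ioo (-b) b) := by
    have := hconc.continuousOn_interior
    rwa [interior_Icc] at this
  set β := θ * b with hβ
  have hβ0 : 0 < β := mul_pos hθ0 hb0
  have hβb : β < b := by nlinarith
  -- Clamping the argument makes the restriction of `g` to `[-β, β]` continuous on all of `ℝ`.
  set G : ℝ → ℝ := fun u => g (max (-β) (min β u)) with hG
  have hcl : ∀ u, max (-β) (min β u) ∈ Set.Icc (-β) β := fun u =>
    ⟨le_max_left _ _, max_le (by linarith) (min_le_left _ _)⟩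
  have hGc : Continuous G := by
    refine hcont.comp_continuous (by fun_prop) fun u => ?_
    exact ⟨by linarith [(hcl u).1], by linarith [(hcl u).2]⟩
  have hGe : ∀ u, |u| ≤ β → G u = g u := by
    intro u hu
    obtain ⟨h1, h2⟩ := abs_le.1 hu
    simp only [hG, min_eq_right h2, max_eq_right h1]
  obtain ⟨M, hM⟩ := hK.isBounded.exists_norm_le
  refine ⟨β, hβ0, G, hGc, ⟨M, fun u => ?_⟩, fun u hu => ?_, ?_⟩
  · have h1 := hgmem _ ((abs_le.2 (hcl u)).trans hβb.le)
    exact (norm_snd_le _).trans (hM _ h1)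
  · rw [hGe u hu]; exact hgmem u (hu.trans hβb.le)
  · have hvol : volume (θ • K) = ENNReal.ofReal (θ ^ 2) * volume K := by
      rw [Measure.addHaar_smul_of_nonneg _ hθ0.le]; simp
    have hcS : IsCompact (θ • K) := hK.smul θ
    have hnn : ∀ u, |u| ≤ β → 0 ≤ G u + G (-u) := by
      intro u hu
      have h1 := hgmem u (hu.trans hβb.le)
      have h2 := hgle (-u) _ (hs _ h1)
      rw [hGe u hu, hGe (-u) (by rwa [abs_neg])]; linarith
    have hslice : ∀ u, volume (Prod.mk u ⁻¹' (θ • K)) ≤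
        (Set.Icc (-β) β).indicator (fun u => ENNReal.ofReal (G u + G (-u))) u := by
      intro u
      have hkey : ∀ p, (u, p) ∈ θ • K → |u| ≤ β ∧ p ∈ Set.Icc (-(G (-u))) (G u) := by
        rintro p ⟨z, hz, hzp⟩
        have hu : |u| ≤ β := by
          have : u = θ * z.1 := by
            have := congrArg Prod.fst hzp; simpa using this.symm
          rw [this, abs_mul, abs_of_pos hθ0]
          exact mul_le_mul_of_nonneg_left (hle z hz) hθ0.le
        have hm : (u, p) ∈ K := by
          rw [← hzp]; exact hsm θ (by rw [abs_of_pos hθ0]; exact hθ1.le) z hz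
        refine ⟨hu, ?_, ?_⟩
        · have := hgle (-u) _ (hs _ hm)
          rw [hGe (-u) (by rwa [abs_neg])]; linarith
        · rw [hGe u hu]; exact hgle u p hm
      by_cases hu : |u| ≤ β
      · rw [Set.indicator_of_mem (Set.mem_Icc.2 (abs_le.1 hu))]
        calc _ ≤ volume (Set.Icc (-(G (-u))) (G u)) := measure_mono fun p hp => (hkey p hp).2
          _ = _ := by rw [Real.volume_Icc, sub_neg_eq_add]
      · have : Prod.mk u ⁻¹' (θ • K) = ∅ := by
          ext p; simp only [Set.mem_preimage, Set.mem_empty_iff_false, iff_false]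
          exact fun h => hu (hkey p h).1
        rw [this, measure_empty]; exact bot_le
    have hii : IntervalIntegrable (fun u => G u + G (-u)) volume (-β) β :=
      (hGc.add (hGc.comp continuous_neg)).intervalIntegrable _ _
    have hI : volume (θ • K) ≤ ENNReal.ofReal (∫ u in (-β)..β, (G u + G (-u))) := by
      rw [Measure.volume_eq_prod, Measure.prod_apply hcS.measurableSet]
      refine (lintegral_mono hslice).trans ?_
      rw [lintegral_indicator measurableSet_Icc, intervalIntegral.integral_of_le (by linarith),
        ← integral_Icc_eq_integral_Ioc, ofReal_integral_eq_lintegral_ofReal]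
      · exact (intervalIntegrable_iff_integrableOn_Icc_of_le (by linarith)).1 hii
      · exact (ae_restrict_iff' measurableSet_Icc).2
          (Filter.Eventually.of_forall fun u hu => hnn u (abs_le.2 hu))
    have hI2 : ∫ u in (-β)..β, (G u + G (-u)) = 2 * ∫ u in (-β)..β, G u := by
      rw [intervalIntegral.integral_add (hGc.intervalIntegrable _ _)
        (Continuous.intervalIntegrable (by fun_prop) _ _),
        intervalIntegral.integral_comp_neg, neg_neg]; ring
    have hI0 : 0 ≤ ∫ u in (-β)..β, (G u + G (-u)) :=
      intervalIntegral.integral_nonneg (by linarith) fun u hu => hnn u (abs_le.2 hu)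
    have := ENNReal.toReal_mono ENNReal.ofReal_ne_top hI
    rwa [hvol, ENNReal.toReal_mul, ENNReal.toReal_ofReal (sq_nonneg θ),
      ENNReal.toReal_ofReal hI0, hI2] at this

/-! ### The polar dual -/

lemma polarDual_pairing_le_gauge {L : Set (ℝ × ℝ)}
    (h0 : L ∈ nhds (0 : ℝ × ℝ)) {p : ℝ × ℝ} (hp : p ∈ polarDual L) (v : ℝ × ℝ) :
    p.1 * v.1 + p.2 * v.2 ≤ gauge L v := by
  refine le_of_forall_pos_le_add fun δ hδ => ?_
  obtain ⟨s, hs0, hs, hv⟩ := exists_lt_of_gauge_lt (absorbent_nhds_zero h0)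
    (lt_add_of_pos_right (gauge L v) hδ)
  obtain ⟨y, hy, rfl⟩ := hv
  refine le_trans ?_ hs.le
  have := mul_le_mul_of_nonneg_left (hp y hy) hs0.le
  simp only [Prod.smul_fst, Prod.smul_snd, smul_eq_mul]
  linarith

lemma isCompact_polarDual {L : Set (ℝ × ℝ)} (h0 : L ∈ nhds (0 : ℝ × ℝ)) :
    IsCompact (polarDual L) := by
  obtain ⟨ε, hε, hεL⟩ := Metric.nhds_basis_closedBall.mem_iff.1 h0
  refine Metric.isCompact_of_isClosed_isBounded ?_ ?_
  · have : polarDual L = ⋂ y ∈ L, {x : ℝ × ℝ | x.1 * y.1 + x.2 * y.2 ≤ 1} := by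
      ext x; simp [polarDual]
    rw [this]
    exact isClosed_biInter fun y _ => isClosed_le (by fun_prop) continuous_const
  · refine (Metric.isBounded_closedBall (x := (0 : ℝ × ℝ)) (r := 1 / ε)).subset fun p hp => ?_
    have hm : ∀ a b : ℝ, |a| ≤ ε → |b| ≤ ε → ((a, b) : ℝ × ℝ) ∈ L := fun a b ha hb =>
      hεL (by rw [mem_closedBall_zero_iff, Prod.norm_def]; exact max_le ha hb)
    have e1 := hp _ (hm ε 0 (abs_of_pos hε).le (by simpa using hε.le))
    have e2 := hp _ (hm (-ε) 0 (by rw [abs_neg]; exact (abs_of_pos hε).le) (by simpa using hε.le))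
    have e3 := hp _ (hm 0 ε (by simpa using hε.le) (abs_of_pos hε).le)
    have e4 := hp _ (hm 0 (-ε) (by simpa using hε.le) (by rw [abs_neg]; exact (abs_of_pos hε).le))
    simp only at e1 e2 e3 e4
    rw [mem_closedBall_zero_iff, Prod.norm_def]
    refine max_le ?_ ?_
    · rw [Real.norm_eq_abs, abs_le, neg_le, le_div_iff₀ hε, le_div_iff₀ hε]
      constructor <;> linarith
    · rw [Real.norm_eq_abs, abs_le, neg_le, le_div_iff₀ hε, le_div_iff₀ hε]
      constructor <;> linarith

lemma convex_polarDual (L : Set (ℝ × ℝ)) : Convex ℝ (polarDual L) := by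
  intro p hp q hq a b ha hb hab y hy
  have h1 := mul_le_mul_of_nonneg_left (hp y hy) ha
  have h2 := mul_le_mul_of_nonneg_left (hq y hy) hb
  simp only [Prod.fst_add, Prod.snd_add, Prod.smul_fst, Prod.smul_snd, smul_eq_mul]
  linarith

lemma neg_mem_polarDual {L : Set (ℝ × ℝ)} (hsym : L = -L) {p : ℝ × ℝ} (hp : p ∈ polarDual L) :
    -p ∈ polarDual L := by
  intro y hy
  have hy' : -y ∈ L := by rw [hsym] at hy; exact hy
  have := hp _ hy'
  simp only [Prod.fst_neg, Prod.snd_neg] at this ⊢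
  linarith

lemma exists_pos_mem_polarDual {L : Set (ℝ × ℝ)} (hcomp : IsCompact L) :
    ∃ c > 0, ((c, 0) : ℝ × ℝ) ∈ polarDual L := by
  obtain ⟨C, hC0, hC⟩ := hcomp.isBounded.exists_pos_norm_le
  refine ⟨1 / C, by positivity, fun y hy => ?_⟩
  have h1 : y.1 ≤ C := (le_abs_self _).trans ((norm_fst_le y).trans (hC y hy))
  simp only [zero_mul, add_zero]
  rw [one_div, inv_mul_le_iff₀ hC0]; linarith

/-! ### Comparing the curve with the polar body -/

/-- Schmidt's comparison, for a curve with velocity `(x', r u')`. For each `t` take the point of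
`L*` with first coordinate `ε u(t)`, on the graph of `G` or of `v ↦ -G (-v)` according to whether
`t` lies on the way from `t₀` to `t₁` or on the way back. Pairing this point with the velocity and
integrating gives the left-hand side: the first term is the area of the curve, up to a factor, and
the second is `r` times the area between the two graphs. Pointwise the pairing is at most the gauge
of the velocity. The sign `ε` accounts for the two orientations. -/
lemma schmidt_inequality {L : Set (ℝ × ℝ)} (h0 : L ∈ nhds (0 : ℝ × ℝ))
    (hsym : L = -L) {x' u u' G : ℝ → ℝ} {ε β M t₀ t₁ : ℝ} (hε : ε = 1 ∨ ε = -1)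
    (hGc : Continuous G) (hGM : ∀ v, |G v| ≤ M)
    (hGm : ∀ v, |v| ≤ β → (v, G v) ∈ polarDual L)
    (hx' : IntervalIntegrable x' volume 0 1) (hu'i : IntervalIntegrable u' volume 0 1)
    (hu : AbsolutelyContinuousOnInterval u 0 1)
    (hu' : ∀ᵐ t, t ∈ Set.uIcc (0:ℝ) 1 → HasDerivAt u (u' t) t) (hcl : u 0 = u 1)
    (ht₀ : t₀ ∈ Set.Icc (0:ℝ) 1) (ht₁ : t₁ ∈ Set.Icc (0:ℝ) 1)
    (hu₀ : u t₀ = -β) (hu₁ : u t₁ = β) (hub : ∀ t ∈ Set.Icc (0:ℝ) 1, |u t| ≤ β)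
    {r : ℝ} (hg : IntervalIntegrable (fun t => gauge L (x' t, r * u' t)) volume 0 1) :
    ε * (∫ t in (0:ℝ)..1, u t * x' t) + r * (2 * ∫ v in (-β)..β, G v) ≤
      ∫ t in (0:ℝ)..1, gauge L (x' t, r * u' t) := by
  have hc1 : Continuous fun v => G (ε * v) := by fun_prop
  have hc2 : Continuous fun v => G (-(ε * v)) := by fun_prop
  obtain ⟨κ, hκ, hκi, hκe⟩ := exists_branch (k₁ := fun v => G (ε * v))
    (k₂ := fun v => -G (-(ε * v))) (M := M) ht₀ ht₁ hu hu'i hu' hcl hc1 hc2.neg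
    (fun v => hGM _) (fun v => by rw [abs_neg]; exact hGM _)
  have hI : ∫ v in (-β)..β, (G (ε * v) - -G (-(ε * v))) = 2 * ∫ v in (-β)..β, G v := by
    simp only [sub_neg_eq_add]
    rw [intervalIntegral.integral_add (hc1.intervalIntegrable _ _) (hc2.intervalIntegrable _ _)]
    have hneg : ∫ v in (-β)..β, G (-v) = ∫ v in (-β)..β, G v := by
      rw [intervalIntegral.integral_comp_neg, neg_neg]
    rcases hε with rfl | rfl
    · simp only [one_mul, hneg]; ring
    · simp only [neg_mul, one_mul, neg_neg, hneg]; ring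
  rw [hu₀, hu₁, hI] at hκe
  have hi1 : IntervalIntegrable (fun t => u t * x' t) volume 0 1 :=
    hx'.continuousOn_mul hu.continuousOn
  rw [← hκe, ← intervalIntegral.integral_const_mul, ← intervalIntegral.integral_const_mul,
    ← intervalIntegral.integral_add (hi1.const_mul ε) (hκi.const_mul r)]
  refine intervalIntegral.integral_mono_on zero_le_one ((hi1.const_mul ε).add (hκi.const_mul r))
    hg fun t ht => ?_
  have habs : |ε * u t| ≤ β := by
    rcases hε with rfl | rfl
    · rw [one_mul]; exact hub t ht
    · rw [neg_one_mul, abs_neg]; exact hub t ht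
  have hmem : (ε * u t, κ t) ∈ polarDual L := by
    rcases hκ t with h | h <;> rw [h]
    · exact hGm _ habs
    · have := neg_mem_polarDual hsym (hGm (-(ε * u t)) (by rwa [abs_neg]))
      simpa using this
  have := polarDual_pairing_le_gauge h0 hmem (x' t, r * u' t)
  simp only at this
  linarith

lemma intervalIntegrable_gauge {L : Set (ℝ × ℝ)} (hconv : Convex ℝ L)
    (h0 : L ∈ nhds (0 : ℝ × ℝ)) {v : ℝ → ℝ × ℝ} (hv : IntervalIntegrable v volume 0 1) :
    IntervalIntegrable (fun t => gauge L (v t)) volume 0 1 := by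
  obtain ⟨ε, hε, hεL⟩ := Metric.mem_nhds_iff.1 h0
  rw [intervalIntegrable_iff] at hv ⊢
  refine (hv.norm.const_mul ε⁻¹).mono'
    ((continuous_gauge hconv h0).comp_aestronglyMeasurable hv.aestronglyMeasurable)
    (Filter.Eventually.of_forall fun t => ?_)
  rw [Real.norm_of_nonneg (gauge_nonneg _), ← div_eq_inv_mul, le_div_iff₀' hε]
  exact mul_gauge_le_norm hεL

lemma ac_primitive {f : ℝ → ℝ} (hf : IntervalIntegrable f volume 0 1) (c : ℝ) :
    AbsolutelyContinuousOnInterval (fun t => c + ∫ s in (0:ℝ)..t, f s) 0 1 ∧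
    ∀ᵐ t, t ∈ Set.uIcc (0:ℝ) 1 → HasDerivAt (fun t => c + ∫ s in (0:ℝ)..t, f s) (f t) t := by
  constructor
  · have h1 : AbsolutelyContinuousOnInterval (fun _ : ℝ => c) 0 1 :=
      ((LipschitzWith.const c).lipschitzOnWith (s := Set.uIcc 0 1)).absolutelyContinuousOnInterval
    exact h1.add (hf.absolutelyContinuousOnInterval_intervalIntegral (c := 0) (by simp))
  · filter_upwards [hf.ae_hasDerivAt_integral] with t ht hm
    exact (ht hm 0 (by simp)).const_add c

/-- Busemann's inequality with `vol(θ L*)`, `θ < 1`, in place of `vol(L*)`. The integral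
`∫ Y x'` is the area up to sign. -/
lemma busemann_aux {L : Set (ℝ × ℝ)}
    (hcomp : IsCompact L) (hconv : Convex ℝ L) (hsym : L = -L) (h0 : L ∈ nhds (0 : ℝ × ℝ))
    {x' Y y' : ℝ → ℝ} (hx' : IntervalIntegrable x' volume 0 1)
    (hy' : IntervalIntegrable y' volume 0 1) (hx0 : ∫ t in (0:ℝ)..1, x' t = 0)
    (hY : AbsolutelyContinuousOnInterval Y 0 1)
    (hYd : ∀ᵐ t, t ∈ Set.uIcc (0:ℝ) 1 → HasDerivAt Y (y' t) t) (hYcl : Y 0 = Y 1)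
    {θ : ℝ} (hθ0 : 0 < θ) (hθ1 : θ < 1) :
    4 * (θ ^ 2 * (volume (polarDual L)).toReal) * |∫ t in (0:ℝ)..1, Y t * x' t| ≤
      (∫ t in (0:ℝ)..1, gauge L (x' t, y' t)) ^ 2 := by
  obtain ⟨β, hβ, G, hGc, ⟨M, hGM⟩, hGm, hvol⟩ := exists_profile (isCompact_polarDual h0)
    (convex_polarDual L) (fun p hp => neg_mem_polarDual hsym hp)
    (exists_pos_mem_polarDual hcomp) hθ0 hθ1
  have hYc : ContinuousOn Y (Set.Icc 0 1) := by
    have := hY.continuousOn; rwa [Set.uIcc_of_le zero_le_one] at this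
  have hne : (Set.Icc (0:ℝ) 1).Nonempty := ⟨0, by simp⟩
  obtain ⟨t₀, ht₀, hmin⟩ := isCompact_Icc.exists_isMinOn hne hYc
  obtain ⟨t₁, ht₁, hmax⟩ := isCompact_Icc.exists_isMaxOn hne hYc
  -- The strip containing the curve, `|Y - c| ≤ R`, is matched with `|v| ≤ β` by the scaling `r`.
  set c := (Y t₀ + Y t₁) / 2 with hc
  set R := (Y t₁ - Y t₀) / 2 with hR
  have hR0 : 0 ≤ R := by have : Y t₀ ≤ Y t₁ := hmin ht₁; linarith
  have hbd : ∀ t ∈ Set.Icc (0:ℝ) 1, |Y t - c| ≤ R := fun t ht => by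
    have h1 : Y t₀ ≤ Y t := hmin ht
    have h2 : Y t ≤ Y t₁ := hmax ht
    rw [abs_le]; constructor <;> linarith
  have hYx : IntervalIntegrable (fun t => Y t * x' t) volume 0 1 :=
    hx'.continuousOn_mul hY.continuousOn
  have hB : ∫ t in (0:ℝ)..1, Y t * x' t = ∫ t in (0:ℝ)..1, (Y t - c) * x' t := by
    simp only [sub_mul]
    rw [intervalIntegral.integral_sub hYx (hx'.const_mul c),
      intervalIntegral.integral_const_mul, hx0]; ring
  -- If `R = 0`, then `Y` is constant and the area is zero.
  rcases hR0.eq_or_lt with hR0 | hR0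
  · have : ∫ t in (0:ℝ)..1, (Y t - c) * x' t = 0 := by
      refine (intervalIntegral.integral_congr (g := fun _ => (0 : ℝ)) fun t ht => ?_).trans
        intervalIntegral.integral_zero
      rw [Set.uIcc_of_le zero_le_one] at ht
      have := hbd t ht
      rw [← hR0, abs_nonpos_iff] at this
      simp [this]
    rw [hB, this, abs_zero, mul_zero]; positivity
  set r := R / β with hr
  have hr0 : 0 < r := by positivity
  have hrβ : R = r * β := by rw [hr]; field_simp
  have huE : ∀ t, r⁻¹ * (Y t + -c) = (Y t - c) / r := fun t => by rw [div_eq_inv_mul]; ring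
  have hu : AbsolutelyContinuousOnInterval (fun t => r⁻¹ * (Y t + -c)) 0 1 := by
    have h1 : AbsolutelyContinuousOnInterval (fun _ : ℝ => -c) 0 1 :=
      ((LipschitzWith.const (-c)).lipschitzOnWith
        (s := Set.uIcc 0 1)).absolutelyContinuousOnInterval
    exact (hY.add h1).const_mul r⁻¹
  have hrr : ∀ t, r * (r⁻¹ * y' t) = y' t := fun t => by field_simp
  have hgi : IntervalIntegrable (fun t => gauge L (x' t, r * (r⁻¹ * y' t))) volume 0 1 := by
    simp only [hrr]
    refine intervalIntegrable_gauge hconv h0 ?_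
    exact ⟨hx'.1.prodMk hy'.1, hx'.2.prodMk hy'.2⟩
  have key : ∀ ε : ℝ, ε = 1 ∨ ε = -1 →
      ε * (r⁻¹ * ∫ t in (0:ℝ)..1, Y t * x' t) + r * (2 * ∫ v in (-β)..β, G v) ≤
      ∫ t in (0:ℝ)..1, gauge L (x' t, y' t) := by
    intro ε hε
    have := schmidt_inequality h0 hsym (x' := x') (u := fun t => r⁻¹ * (Y t + -c))
      (u' := fun t => r⁻¹ * y' t) (t₀ := t₀) (t₁ := t₁) (r := r) hε hGc hGM hGm hx'
      (hy'.const_mul r⁻¹) hu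
      (hYd.mono fun t ht hm => ((ht hm).add_const (-c)).const_mul r⁻¹) (by simp only [hYcl])
      ht₀ ht₁ (by rw [huE, div_eq_iff hr0.ne']; linarith)
      (by rw [huE, div_eq_iff hr0.ne']; linarith)
      (fun t ht => by
        rw [huE, abs_div, abs_of_pos hr0, div_le_iff₀ hr0]; linarith [hbd t ht]) hgi
    simp only [hrr] at this
    rw [hB, ← intervalIntegral.integral_const_mul]
    simpa only [mul_assoc, ← sub_eq_add_neg] using this
  set ℓ := ∫ t in (0:ℝ)..1, gauge L (x' t, y' t)
  set B := ∫ t in (0:ℝ)..1, Y t * x' t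
  set W := θ ^ 2 * (volume (polarDual L)).toReal with hW
  have hW0 : 0 ≤ W := by positivity
  have hsum : r⁻¹ * |B| + r * W ≤ ℓ := by
    have h3 := mul_le_mul_of_nonneg_left hvol hr0.le
    rcases abs_choice B with h | h <;> rw [h]
    · linarith [key 1 (Or.inl rfl)]
    · linarith [key (-1) (Or.inr rfl)]
  -- The AM-GM inequality removes the scaling factor `r`.
  have hBn : 0 ≤ r⁻¹ * |B| := by positivity
  have hprod : (r⁻¹ * |B|) * (r * W) = W * |B| := by field_simp
  calc 4 * W * |B| = 4 * ((r⁻¹ * |B|) * (r * W)) := by rw [hprod]; ring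
    _ ≤ (r⁻¹ * |B| + r * W) ^ 2 := by nlinarith [sq_nonneg (r⁻¹ * |B| - r * W)]
    _ ≤ ℓ ^ 2 := pow_le_pow_left₀ (by positivity) hsum 2

/-- The components of `γ'` are integrable, and on `[0,1]` the components of `γ` are their
primitives. -/
lemma ACCurve.components (γ : ACCurve) :
    IntervalIntegrable (fun t => (γ.deriv t).1) volume 0 1 ∧
    IntervalIntegrable (fun t => (γ.deriv t).2) volume 0 1 ∧
    ∀ t ∈ Set.Icc (0:ℝ) 1,
      (γ.toFun t).1 = (γ.toFun 0).1 + ∫ s in (0:ℝ)..t, (γ.deriv s).1 ∧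
      (γ.toFun t).2 = (γ.toFun 0).2 + ∫ s in (0:ℝ)..t, (γ.deriv s).2 := by
  refine ⟨⟨γ.integrable.1.fst, γ.integrable.2.fst⟩,
    ⟨γ.integrable.1.snd, γ.integrable.2.snd⟩, fun t ht => ?_⟩
  have hi : IntervalIntegrable γ.deriv volume 0 t := γ.integrable.mono_set (by
    rw [Set.uIcc_of_le ht.1, Set.uIcc_of_le zero_le_one]; exact Set.Icc_subset_Icc_right ht.2)
  have h1 := (ContinuousLinearMap.fst ℝ ℝ ℝ).intervalIntegral_comp_comm hi
  have h2 := (ContinuousLinearMap.snd ℝ ℝ ℝ).intervalIntegral_comp_comm hi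
  simp only [ContinuousLinearMap.coe_fst', ContinuousLinearMap.coe_snd'] at h1 h2
  rw [h1, h2, γ.integral_eq t ht]
  exact ⟨rfl, rfl⟩

/-- For a closed curve, integration by parts turns the symmetric area integral into
`-∫ γ₂ γ₁'`. -/
lemma ACCurve.area_eq (γ : ACCurve) (hclosed : γ.toFun 0 = γ.toFun 1) :
    γ.area = -∫ t in (0:ℝ)..1,
      ((γ.toFun 0).2 + ∫ s in (0:ℝ)..t, (γ.deriv s).2) * (γ.deriv t).1 := by
  obtain ⟨hx', hy', hcomp⟩ := γ.components
  obtain ⟨hX, hXd⟩ := ac_primitive hx' (γ.toFun 0).1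
  obtain ⟨hY, hYd⟩ := ac_primitive hy' (γ.toFun 0).2
  have hends := hcomp 1 (by simp)
  set X : ℝ → ℝ := fun t => (γ.toFun 0).1 + ∫ s in (0:ℝ)..t, (γ.deriv s).1
  set Y : ℝ → ℝ := fun t => (γ.toFun 0).2 + ∫ s in (0:ℝ)..t, (γ.deriv s).2
  have hX01 : X 0 = X 1 := by
    refine Eq.trans ?_ (hends.1)
    rw [← hclosed]; simp [X]
  have hY01 : Y 0 = Y 1 := by
    refine Eq.trans ?_ (hends.2)
    rw [← hclosed]; simp [Y]
  have i1 : IntervalIntegrable (fun t => X t * (γ.deriv t).2) volume 0 1 :=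
    hy'.continuousOn_mul hX.continuousOn
  have i2 : IntervalIntegrable (fun t => Y t * (γ.deriv t).1) volume 0 1 :=
    hx'.continuousOn_mul hY.continuousOn
  have hparts : ∫ t in (0:ℝ)..1, (Y t * (γ.deriv t).1 + X t * (γ.deriv t).2) = 0 := by
    have h := hX.integral_deriv_mul_eq_sub hY
    rw [hX01, hY01, sub_self] at h
    refine (intervalIntegral.integral_congr_ae ?_).trans h
    filter_upwards [hXd, hYd] with t h1 h2 hm
    have hm' := Set.uIoc_subset_uIcc hm
    rw [(h1 hm').deriv, (h2 hm').deriv]; ring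
  rw [intervalIntegral.integral_add i2 i1] at hparts
  have harea : γ.area = (1/2) * ∫ t in (0:ℝ)..1,
      (X t * (γ.deriv t).2 - Y t * (γ.deriv t).1) := by
    rw [ACCurve.area]
    congr 1
    refine intervalIntegral.integral_congr fun t ht => ?_
    rw [Set.uIcc_of_le zero_le_one] at ht
    simp only [(hcomp t ht).1, (hcomp t ht).2, X, Y]
  rw [harea, intervalIntegral.integral_sub i1 i2]
  linarith

/-- Busemann's isoperimetric inequality in Minkowski planes: every closed absolutely
continuous curve satisfies `‖γ‖_L² ≥ 4 · vol(L*) · |A(γ)|`. -/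
theorem busemann_isoperimetric (L : Set (ℝ × ℝ))
    (hcomp : IsCompact L) (hconv : Convex ℝ L) (hsym : L = -L)
    (h0 : (0 : ℝ × ℝ) ∈ interior L)
    (γ : ACCurve) (hclosed : γ.toFun 0 = γ.toFun 1) :
    (γ.length L)^2 ≥ 4 * (volume (polarDual L)).toReal * |γ.area| := by
  have hL : L ∈ nhds (0 : ℝ × ℝ) := mem_interior_iff_mem_nhds.1 h0
  obtain ⟨hx', hy', hcomps⟩ := γ.components
  obtain ⟨hY, hYd⟩ := ac_primitive hy' (γ.toFun 0).2
  obtain ⟨hx1, hy1⟩ := hcomps 1 (by simp)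
  rw [← hclosed] at hx1 hy1
  have hx0 : ∫ t in (0:ℝ)..1, (γ.deriv t).1 = 0 := by linarith
  have hYcl : (γ.toFun 0).2 + ∫ s in (0:ℝ)..0, (γ.deriv s).2 =
      (γ.toFun 0).2 + ∫ s in (0:ℝ)..1, (γ.deriv s).2 := by
    rw [← hy1, intervalIntegral.integral_same, add_zero]
  have key : ∀ θ ∈ Set.Ioo (0:ℝ) 1,
      4 * (θ ^ 2 * (volume (polarDual L)).toReal) * |γ.area| ≤ (γ.length L) ^ 2 := by
    intro θ hθ
    rw [γ.area_eq hclosed, abs_neg]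
    exact busemann_aux hcomp hconv hsym hL hx' hy' hx0 hY hYd hYcl hθ.1 hθ.2
  have hlim : Filter.Tendsto
      (fun θ : ℝ => 4 * (θ ^ 2 * (volume (polarDual L)).toReal) * |γ.area|)
      (nhdsWithin 1 (Set.Iio 1))
      (nhds (4 * (1 ^ 2 * (volume (polarDual L)).toReal) * |γ.area|)) :=
    (Continuous.tendsto (by fun_prop) 1).mono_left nhdsWithin_le_nhds
  rw [one_pow, one_mul] at hlim
  exact le_of_tendsto hlim
    (Filter.mem_of_superset (Ioo_mem_nhdsLT zero_lt_one) key)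
end

section
/- Let L ⊂ ℝ² be a compact convex set with L = −L and 0 in its interior. Then there exists a closed absolutely continuous curve γ : [0,1] → ℝ² with γ(0) = γ(1), A(γ) ≠ 0, and (‖γ‖_L)² = 4 · vol(L*) · |A(γ)|; in fact any parametrization of the boundary of the rotation by π/2 of the polar dual L* achieves this equality. -/
/-!
Let `K` be the polar dual of `L` rotated by `π/2` (`isoper L`), so that `x ∈ K` means
`x.2 * y.1 - x.1 * y.2 ≤ 1` for all `y ∈ L`. The theorem follows from two identities for a closed
absolutely continuous curve `γ = (u, v)` tracing the boundary of `K` once: `|A(γ)| = vol(L*)` and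
`‖γ‖_L = 2 vol(L*)` (`isoperimetrix_core`).

*Length.* At a boundary point `γ(t)` some `y ∈ L` gives equality in the inequality above
(`exists_support`). Along `γ` the left-hand side is maximal at time `t`, so its derivative vanishes
and `γ'(t)` is a multiple of `y`, the factor being `v u' - u v'`. As `‖y‖_L = 1`, this gives
`‖γ'‖_L = |u v' - v u'|` almost everywhere (`gauge_velocity`).

*Area.* The curve has an absolutely continuous polar angle `θ` with
`θ' = (u v' - v u') / (u² + v²)` (`polar_lift`). A boundary point of `K` is determined by its
direction, so injectivity of `γ` makes `θ` monotone with total variation exactly `2π`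
(`winding`). Hence `u v' - v u'` has constant sign almost everywhere, so the length is `2 |A(γ)|`. With
`r(θ)` the radial function of `K`, `u v' - v u' = r(θ)² θ'`, and the change of variables `θ` turns
`2 |A(γ)|` into the integral of `r²` over a period, that is, twice the area of `K`
(`volume_polarDual`), which equals `vol(L*)` because rotations preserve area.

For existence, the parametrization by polar angle is used (`exists_parametrization`).
-/

open MeasureTheory

/-- Rotation of the plane by `π/2`. -/
def rotHalfPi (v : ℝ × ℝ) : ℝ × ℝ := (-v.2, v.1)

open Set

/-! ### Absolutely continuous functions and polar angles -/

/-- Postcomposition with a `C¹` function preserves absolute continuity, because a `C¹` function is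
Lipschitz on the compact interval that is the range. -/
lemma ac_comp {f g : ℝ → ℝ} {a b : ℝ} (hf : AbsolutelyContinuousOnInterval f a b)
    (hg : ContDiffOn ℝ 1 g (f '' uIcc a b)) :
    AbsolutelyContinuousOnInterval (fun t => g (f t)) a b := by
  have hcomp : IsCompact (f '' uIcc a b) := isCompact_uIcc.image_of_continuousOn hf.continuousOn
  have hconv : Convex ℝ (f '' uIcc a b) :=
    (isPreconnected_uIcc.image _ hf.continuousOn).ordConnected.convex
  obtain ⟨K, hK⟩ := hg.exists_lipschitzOnWith (by decide) hconv hcomp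
  rw [absolutelyContinuousOnInterval_iff] at hf ⊢
  intro ε hε
  obtain ⟨δ, hδ, h⟩ := hf (ε / (K + 1)) (by positivity)
  refine ⟨δ, hδ, fun E hE hE' => ?_⟩
  have h1 := h E hE hE'
  calc ∑ i ∈ Finset.range E.1, dist (g (f (E.2 i).1)) (g (f (E.2 i).2))
      ≤ ∑ i ∈ Finset.range E.1, K * dist (f (E.2 i).1) (f (E.2 i).2) := by
        refine Finset.sum_le_sum fun i hi => ?_
        have := hE.1 i hi
        exact hK.dist_le_mul _ (mem_image_of_mem f this.1) _ (mem_image_of_mem f this.2)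
    _ = K * ∑ i ∈ Finset.range E.1, dist (f (E.2 i).1) (f (E.2 i).2) := by
        rw [Finset.mul_sum]
    _ ≤ (K + 1) * ∑ i ∈ Finset.range E.1, dist (f (E.2 i).1) (f (E.2 i).2) := by
        gcongr
        linarith
    _ < ε := by
        rw [lt_div_iff₀ (by positivity)] at h1
        linarith

lemma ac_comp_contDiff {f g : ℝ → ℝ} {a b : ℝ} (hf : AbsolutelyContinuousOnInterval f a b)
    (hg : ContDiff ℝ 1 g) : AbsolutelyContinuousOnInterval (fun t => g (f t)) a b :=
  ac_comp hf hg.contDiffOn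

lemma ac_const_add {f : ℝ → ℝ} {a b : ℝ} (c : ℝ) (hf : AbsolutelyContinuousOnInterval f a b) :
    AbsolutelyContinuousOnInterval (fun t => c + f t) a b :=
  ac_comp_contDiff (g := fun x => c + x) hf (by fun_prop)

lemma ac_of_primitive {u du : ℝ → ℝ} (hdu : IntervalIntegrable du volume 0 1)
    (hu : ∀ t, u t = u 0 + ∫ s in (0:ℝ)..t, du s) :
    AbsolutelyContinuousOnInterval u 0 1 ∧
      ∀ᵐ t, t ∈ Icc (0:ℝ) 1 → HasDerivAt u (du t) t := by
  have e : u = fun t => u 0 + ∫ s in (0:ℝ)..t, du s := funext hu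
  constructor
  · rw [e]
    exact ac_const_add _ (hdu.absolutelyContinuousOnInterval_intervalIntegral (by simp))
  · filter_upwards [hdu.ae_hasDerivAt_integral] with t ht h
    rw [uIcc_of_le zero_le_one] at ht
    rw [e]
    exact (ht h 0 (by simp)).const_add _

/-- Polar coordinates along an absolutely continuous planar curve avoiding the origin. The angle `θ`
and the logarithm `Λ` of the radius (up to a constant) are *defined* as primitives of the imaginary
and real parts of `z' / z`, where `z = u + i v`; then `z * exp (-(Λ + i θ))` is absolutely continuous
with derivative zero almost everywhere, hence constant. -/
lemma polar_lift {u v du dv : ℝ → ℝ} (hdu : IntervalIntegrable du volume 0 1)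
    (hdv : IntervalIntegrable dv volume 0 1)
    (hu : ∀ t, u t = u 0 + ∫ s in (0:ℝ)..t, du s) (hv : ∀ t, v t = v 0 + ∫ s in (0:ℝ)..t, dv s)
    (hne : ∀ t ∈ Icc (0:ℝ) 1, 0 < u t ^ 2 + v t ^ 2) :
    ∃ θ ρ : ℝ → ℝ, AbsolutelyContinuousOnInterval θ 0 1 ∧
      (∀ t ∈ Icc (0:ℝ) 1, 0 < ρ t ∧ u t = ρ t * Real.cos (θ t) ∧ v t = ρ t * Real.sin (θ t)) ∧
      ∀ᵐ t, t ∈ Icc (0:ℝ) 1 →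
        HasDerivAt θ ((u t * dv t - v t * du t) / (u t ^ 2 + v t ^ 2)) t := by
  have hI : uIcc (0:ℝ) 1 = Icc 0 1 := uIcc_of_le zero_le_one
  obtain ⟨hua, hud⟩ := ac_of_primitive hdu hu
  obtain ⟨hva, hvd⟩ := ac_of_primitive hdv hv
  have huc := hua.continuousOn
  have hvc := hva.continuousOn
  have hnc : ContinuousOn (fun t => (u t ^ 2 + v t ^ 2)⁻¹) (uIcc 0 1) :=
    ((huc.pow 2).add (hvc.pow 2)).inv₀ fun t ht => (hne t (hI ▸ ht)).ne'
  obtain ⟨ρ₀, θ₀, hρ₀, hu0, hv0⟩ : ∃ ρ₀ θ₀ : ℝ, 0 < ρ₀ ∧ u 0 = ρ₀ * Real.cos θ₀ ∧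
      v 0 = ρ₀ * Real.sin θ₀ := by
    have hz : (⟨u 0, v 0⟩ : ℂ) ≠ 0 := by
      intro h
      have h1 : u 0 = 0 := congrArg Complex.re h
      have h2 : v 0 = 0 := congrArg Complex.im h
      have := hne 0 (by simp)
      rw [h1, h2] at this
      norm_num at this
    refine ⟨‖(⟨u 0, v 0⟩ : ℂ)‖, Complex.arg ⟨u 0, v 0⟩, norm_pos_iff.2 hz, ?_, ?_⟩
    · rw [Complex.norm_mul_cos_arg]
    · rw [Complex.norm_mul_sin_arg]
  set dθ : ℝ → ℝ := fun t => (u t * dv t - v t * du t) * (u t ^ 2 + v t ^ 2)⁻¹ with hdθ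
  set dΛ : ℝ → ℝ := fun t => (u t * du t + v t * dv t) * (u t ^ 2 + v t ^ 2)⁻¹ with hdΛ
  have hdθi : IntervalIntegrable dθ volume 0 1 :=
    ((hdv.continuousOn_mul huc).sub (hdu.continuousOn_mul hvc)).mul_continuousOn hnc
  have hdΛi : IntervalIntegrable dΛ volume 0 1 :=
    ((hdu.continuousOn_mul huc).add (hdv.continuousOn_mul hvc)).mul_continuousOn hnc
  set θ : ℝ → ℝ := fun t => θ₀ + ∫ s in (0:ℝ)..t, dθ s with hθ
  set Λ : ℝ → ℝ := fun t => 0 + ∫ s in (0:ℝ)..t, dΛ s with hΛ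
  have hθ0 : θ 0 = θ₀ := by simp [hθ]
  have hΛ0 : Λ 0 = 0 := by simp [hΛ]
  obtain ⟨hθa, hθd⟩ := ac_of_primitive (u := θ) hdθi (fun t => by rw [hθ0])
  obtain ⟨hΛa, hΛd⟩ := ac_of_primitive (u := Λ) hdΛi (fun t => by rw [hΛ0])
  have hE := ac_comp_contDiff (g := fun x => Real.exp (-x)) hΛa (by fun_prop)
  have hC := ac_comp_contDiff (g := Real.cos) hθa Real.contDiff_cos
  have hS := ac_comp_contDiff (g := Real.sin) hθa Real.contDiff_sin
  -- The components of `(u + i v) * exp (-(Λ + i θ))` have zero derivative almost everywhere.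
  have hP := (hE.fun_mul ((hua.fun_mul hC).fun_add (hva.fun_mul hS))).const_of_ae_hasDerivAt_zero (by
    filter_upwards [hud, hvd, hθd, hΛd] with t h1 h2 h3 h4 ht
    rw [hI] at ht
    have hn := (hne t ht).ne'
    have := ((h4 ht).neg.exp).mul
      (((h1 ht).mul (h3 ht).cos).add ((h2 ht).mul (h3 ht).sin))
    convert! this using 1
    simp only [hdθ, hdΛ, Pi.neg_apply, Pi.mul_apply, Pi.add_apply]
    field_simp
    ring)
  have hQ := (hE.fun_mul ((hva.fun_mul hC).fun_sub (hua.fun_mul hS))).const_of_ae_hasDerivAt_zero (by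
    filter_upwards [hud, hvd, hθd, hΛd] with t h1 h2 h3 h4 ht
    rw [hI] at ht
    have hn := (hne t ht).ne'
    have := ((h4 ht).neg.exp).mul
      (((h2 ht).mul (h3 ht).cos).sub ((h1 ht).mul (h3 ht).sin))
    convert! this using 1
    simp only [hdθ, hdΛ, Pi.neg_apply, Pi.mul_apply, Pi.sub_apply]
    field_simp
    ring)
  obtain ⟨P, hP⟩ := hP
  obtain ⟨Q, hQ⟩ := hQ
  have hP0 : P = ρ₀ := by
    rw [← hP 0 (by simp), hθ0, hΛ0, hu0, hv0]
    simp
    linear_combination ρ₀ * Real.cos_sq_add_sin_sq θ₀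
  have hQ0 : Q = 0 := by
    rw [← hQ 0 (by simp), hθ0, hΛ0, hu0, hv0]
    simp
    ring
  refine ⟨θ, fun t => ρ₀ * Real.exp (Λ t), hθa, fun t ht => ⟨by positivity, ?_⟩, ?_⟩
  · have h1 := hP t (hI ▸ ht)
    have h2 := hQ t (hI ▸ ht)
    rw [hP0, Real.exp_neg] at h1
    rw [hQ0, Real.exp_neg] at h2
    have he := Real.exp_pos (Λ t)
    field_simp at h1 h2
    have hcs := Real.cos_sq_add_sin_sq (θ t)
    constructor
    · linear_combination Real.cos (θ t) * h1 - Real.sin (θ t) * h2 - u t * hcs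
    · linear_combination Real.sin (θ t) * h1 + Real.cos (θ t) * h2 - v t * hcs
  · simpa only [div_eq_mul_inv] using hθd

/-! ### Winding once around the origin -/

/-- The increasing case of `winding`. The total angle is a positive multiple `2πk`, and `k ≥ 2` would
produce a parameter in `(0, 1)` with the same direction as `0`. -/
lemma winding_mono {θ : ℝ → ℝ} (hc : ContinuousOn θ (Icc 0 1))
    (hinj : ∀ s ∈ Ico (0:ℝ) 1, ∀ t ∈ Ico (0:ℝ) 1, Real.cos (θ s) = Real.cos (θ t) →
      Real.sin (θ s) = Real.sin (θ t) → s = t)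
    (hcos : Real.cos (θ 0) = Real.cos (θ 1)) (hsin : Real.sin (θ 0) = Real.sin (θ 1))
    (hm : StrictMonoOn θ (Ioo 0 1)) : θ 1 = θ 0 + 2 * Real.pi := by
  have hpi := Real.pi_pos
  have h0 : θ 0 ≤ θ (1/4) := by
    by_contra! h
    obtain ⟨s, hs, hs'⟩ := intermediate_value_Icc' (by norm_num : (0:ℝ) ≤ 1/4)
      (hc.mono (Icc_subset_Icc le_rfl (by norm_num)))
      (show (θ 0 + θ (1/4)) / 2 ∈ Icc (θ (1/4)) (θ 0) by constructor <;> linarith)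
    have hs0 : s ≠ 0 := by rintro rfl; linarith
    have hs1 : s ≠ 1/4 := by rintro rfl; linarith
    have hs2 : 0 < s := lt_of_le_of_ne hs.1 hs0.symm
    have hs3 : s < 1/4 := lt_of_le_of_ne hs.2 hs1
    have := hm ⟨hs2, by linarith⟩ ⟨by norm_num, by norm_num⟩ hs3
    linarith
  have h1 : θ (1/2) ≤ θ 1 := by
    by_contra! h
    obtain ⟨s, hs, hs'⟩ := intermediate_value_Icc' (by norm_num : (1/2:ℝ) ≤ 1)
      (hc.mono (Icc_subset_Icc (by norm_num) le_rfl))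
      (show (θ (1/2) + θ 1) / 2 ∈ Icc (θ 1) (θ (1/2)) by constructor <;> linarith)
    have hs0 : s ≠ 1/2 := by rintro rfl; linarith
    have hs1 : s ≠ 1 := by rintro rfl; linarith
    have hs2 : 1/2 < s := lt_of_le_of_ne hs.1 hs0.symm
    have hs3 : s < 1 := lt_of_le_of_ne hs.2 hs1
    have := hm ⟨by norm_num, by norm_num⟩ ⟨by linarith, hs3⟩ hs2
    linarith
  have h2 := hm (a := 1/4) (b := 1/2) ⟨by norm_num, by norm_num⟩ ⟨by norm_num, by norm_num⟩
    (by norm_num)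
  obtain ⟨k, hk⟩ := Real.Angle.angle_eq_iff_two_pi_dvd_sub.1
    (Real.Angle.cos_sin_inj hcos.symm hsin.symm)
  have hk0 : 0 < k := by
    by_contra! hk0
    have : (k:ℝ) ≤ 0 := by exact_mod_cast hk0
    nlinarith
  have hk1 : k < 2 := by
    by_contra! hk1
    have hk2 : (2:ℝ) ≤ k := by exact_mod_cast hk1
    -- A second full turn would make the curve return to its starting point too early.
    obtain ⟨s, hs, hs'⟩ := intermediate_value_Icc (by norm_num : (0:ℝ) ≤ 1) hc
      (show θ 0 + 2 * Real.pi ∈ Icc (θ 0) (θ 1) by constructor <;> nlinarith)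
    have hs1 : s ≠ 1 := by rintro rfl; nlinarith
    have := hinj s ⟨hs.1, lt_of_le_of_ne hs.2 hs1⟩ 0 ⟨le_rfl, one_pos⟩
      (by rw [hs', Real.cos_add_two_pi]) (by rw [hs', Real.sin_add_two_pi])
    subst this
    linarith
  have : k = 1 := by omega
  subst this
  push_cast at hk
  linarith

/-- A closed continuous curve which meets every ray from the origin at most once on `[0,1)` has a
monotone angle, and turns exactly once around the origin; `σ` is its orientation. -/
lemma winding {θ : ℝ → ℝ} (hc : ContinuousOn θ (Icc 0 1))
    (hinj : ∀ s ∈ Ico (0:ℝ) 1, ∀ t ∈ Ico (0:ℝ) 1, Real.cos (θ s) = Real.cos (θ t) →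
      Real.sin (θ s) = Real.sin (θ t) → s = t)
    (hcos : Real.cos (θ 0) = Real.cos (θ 1)) (hsin : Real.sin (θ 0) = Real.sin (θ 1)) :
    ∃ σ : ℝ, (σ = 1 ∨ σ = -1) ∧ MonotoneOn (fun t => σ * θ t) (Ioo 0 1) ∧
      θ 1 = θ 0 + σ * (2 * Real.pi) := by
  have hi : InjOn θ (Ioo 0 1) := fun s hs t ht h =>
    hinj s ⟨hs.1.le, hs.2⟩ t ⟨ht.1.le, ht.2⟩ (by rw [h]) (by rw [h])
  rcases (hc.mono Ioo_subset_Icc_self).strictMonoOn_of_injOn_Ioo one_pos hi with h | h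
  · refine ⟨1, Or.inl rfl, by simpa using h.monotoneOn, ?_⟩
    rw [winding_mono hc hinj hcos hsin h]
    ring
  · refine ⟨-1, Or.inr rfl, by simpa using h.neg.monotoneOn, ?_⟩
    have := winding_mono (θ := fun t => -θ t) hc.neg
      (by simpa only [Real.cos_neg, Real.sin_neg, neg_inj] using hinj) (by simpa using hcos)
      (by simpa using hsin) h.neg
    linarith

/-! ### Area of a star body in polar coordinates -/

lemma lintegral_radial {r : ℝ} (hr : 0 < r) :
    ∫⁻ x in Ioi (0:ℝ), ENNReal.ofReal x * (Iic r).indicator 1 x = ENNReal.ofReal (r ^ 2 / 2) := by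
  have h1 : ∀ x : ℝ, ENNReal.ofReal x * (Iic r).indicator 1 x
      = (Iic r).indicator (fun x => ENNReal.ofReal x) x := by
    intro x
    by_cases hx : x ∈ Iic r <;> simp [hx]
  simp_rw [h1]
  rw [lintegral_indicator measurableSet_Iic, Measure.restrict_restrict measurableSet_Iic,
    inter_comm, Ioi_inter_Iic, ← ofReal_integral_eq_lintegral_ofReal]
  · rw [← intervalIntegral.integral_of_le hr.le]
    simp
  · exact continuous_id.integrableOn_Ioc
  · exact (ae_restrict_iff' measurableSet_Ioc).2 (Filter.Eventually.of_forall fun x hx => hx.1.le)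

/-- The area of the unit ball of a positively homogeneous function, in polar coordinates. -/
lemma volume_polar {g : ℝ × ℝ → ℝ} (hg : Continuous g) (hpos : ∀ x, x ≠ 0 → 0 < g x)
    (hhom : ∀ c : ℝ, 0 < c → ∀ x, g (c • x) = c * g x) :
    volume {x | g x ≤ 1} = ENNReal.ofReal
      ((1/2) * ∫ φ in -Real.pi..Real.pi, ((g (Real.cos φ, Real.sin φ))⁻¹) ^ 2) := by
  have hcs : ∀ φ : ℝ, 0 < g (Real.cos φ, Real.sin φ) := fun φ => hpos _ (by
    intro h
    have h1 := congrArg Prod.fst h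
    have h2 := congrArg Prod.snd h
    simp only [Prod.fst_zero, Prod.snd_zero] at h1 h2
    have := Real.cos_sq_add_sin_sq φ
    rw [h1, h2] at this
    norm_num at this)
  have hcont : Continuous fun φ : ℝ => (g (Real.cos φ, Real.sin φ))⁻¹ :=
    (hg.comp (by fun_prop)).inv₀ fun φ => (hcs φ).ne'
  have hmeas : MeasurableSet {x | g x ≤ 1} := measurableSet_le hg.measurable measurable_const
  have hmf : Measurable ({x | g x ≤ 1}.indicator (1 : ℝ × ℝ → ENNReal)) :=
    measurable_one.indicator hmeas
  rw [← lintegral_indicator_one hmeas, ← lintegral_comp_polarCoord_symm, polarCoord_target,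
    Measure.volume_eq_prod, setLIntegral_prod_symm]
  · have : ∀ φ : ℝ, ∫⁻ x in Ioi (0:ℝ), ENNReal.ofReal (x, φ).1 •
        {x | g x ≤ 1}.indicator 1 (polarCoord.symm (x, φ))
        = ENNReal.ofReal (((g (Real.cos φ, Real.sin φ))⁻¹) ^ 2 / 2) := by
      intro φ
      rw [← lintegral_radial (inv_pos.2 (hcs φ))]
      refine setLIntegral_congr_fun measurableSet_Ioi fun x hx => ?_
      have hx : 0 < x := hx
      simp only [smul_eq_mul]
      congr 1
      have e : g (polarCoord.symm (x, φ)) = x * g (Real.cos φ, Real.sin φ) := by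
        rw [← hhom x hx]
        simp
      have e2 : polarCoord.symm (x, φ) ∈ {x | g x ≤ 1} ↔
          x ∈ Iic (g (Real.cos φ, Real.sin φ))⁻¹ := by
        rw [mem_ofPred_eq, e, mem_Iic, le_inv_comm₀ hx (hcs φ), ← one_div, le_div_iff₀ hx, mul_comm]
      simp only [indicator, e2, Pi.one_apply]
    simp_rw [this]
    rw [← ofReal_integral_eq_lintegral_ofReal]
    · rw [← integral_Ioc_eq_integral_Ioo, ← intervalIntegral.integral_of_le (by linarith [Real.pi_pos]),
        intervalIntegral.integral_div]
      ring_nf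
    · exact (((hcont.pow 2).div_const 2).integrableOn_Icc).mono_set Ioo_subset_Icc_self
    · exact Filter.Eventually.of_forall fun φ => by positivity
  · refine (Measurable.mul ?_ ?_).aemeasurable
    · fun_prop
    · exact hmf.comp continuous_polarCoord_symm.measurable

/-! ### The isoperimetrix -/

/-- The isoperimetrix of `L`: the polar dual rotated by `π/2`. -/
def isoper (L : Set (ℝ × ℝ)) : Set (ℝ × ℝ) := rotHalfPi '' polarDual L

lemma mem_isoper {L : Set (ℝ × ℝ)} {x : ℝ × ℝ} :
    x ∈ isoper L ↔ ∀ y ∈ L, x.2 * y.1 - x.1 * y.2 ≤ 1 := by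
  constructor
  · rintro ⟨a, ha, rfl⟩ y hy
    have := ha y hy
    simp only [rotHalfPi]
    linarith
  · intro h
    refine ⟨(x.2, -x.1), fun y hy => ?_, by simp [rotHalfPi]⟩
    have := h y hy
    simp only
    linarith

lemma isClosed_isoper (L : Set (ℝ × ℝ)) : IsClosed (isoper L) := by
  have : isoper L = ⋂ y ∈ L, {x : ℝ × ℝ | x.2 * y.1 - x.1 * y.2 ≤ 1} := by
    ext x
    simp only [mem_isoper, mem_iInter, mem_ofPred_eq]
  rw [this]
  exact isClosed_biInter fun y _ => isClosed_le (by fun_prop) continuous_const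

lemma convex_isoper (L : Set (ℝ × ℝ)) : Convex ℝ (isoper L) := by
  intro x hx z hz a b ha hb hab
  rw [mem_isoper] at *
  intro y hy
  have h1 := mul_le_mul_of_nonneg_left (hx y hy) ha
  have h2 := mul_le_mul_of_nonneg_left (hz y hy) hb
  simp only [Prod.snd_add, Prod.smul_snd, smul_eq_mul, Prod.fst_add, Prod.smul_fst]
  linarith

lemma isoper_mem_nhds {L : Set (ℝ × ℝ)} (hcomp : IsCompact L) : isoper L ∈ nhds 0 := by
  obtain ⟨M, hM0, hM⟩ := hcomp.isBounded.exists_pos_norm_le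
  refine Filter.mem_of_superset (Metric.ball_mem_nhds 0 (ε := 1 / (2 * M)) (by positivity)) ?_
  intro x hx
  rw [mem_ball_zero_iff, lt_div_iff₀ (by positivity)] at hx
  refine mem_isoper.2 fun y hy => ?_
  have h1 : |x.1| ≤ ‖x‖ := norm_fst_le x
  have h2 : |x.2| ≤ ‖x‖ := norm_snd_le x
  have h3 : |y.1| ≤ M := (norm_fst_le y).trans (hM y hy)
  have h4 : |y.2| ≤ M := (norm_snd_le y).trans (hM y hy)
  have h5 : |x.2| * |y.1| ≤ ‖x‖ * M := by gcongr
  have h6 : |x.1| * |y.2| ≤ ‖x‖ * M := by gcongr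
  have h7 := le_abs_self (x.2 * y.1)
  have h8 := neg_abs_le (x.1 * y.2)
  rw [abs_mul] at h7 h8
  linarith

lemma isBounded_isoper {L : Set (ℝ × ℝ)} (h0 : (0 : ℝ × ℝ) ∈ interior L) :
    Bornology.IsBounded (isoper L) := by
  obtain ⟨ε, hε, hb⟩ := Metric.nhds_basis_closedBall.mem_iff.1 (mem_interior_iff_mem_nhds.1 h0)
  refine isBounded_iff_forall_norm_le.2 ⟨1 / ε, fun x hx => ?_⟩
  rw [mem_isoper] at hx
  have key : ∀ a b : ℝ, |a| ≤ ε → |b| ≤ ε → x.2 * a - x.1 * b ≤ 1 := fun a b ha hb' =>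
    hx (a, b) (hb (by
      rw [mem_closedBall_zero_iff, Prod.norm_def]
      exact max_le ha hb'))
  have he : |ε| ≤ ε := (abs_of_pos hε).le
  have he' : |-ε| ≤ ε := by rw [abs_neg]; exact he
  have hz : |(0:ℝ)| ≤ ε := by simpa using hε.le
  have h1 := key ε 0 he hz
  have h2 := key (-ε) 0 he' hz
  have h3 := key 0 ε hz he
  have h4 := key 0 (-ε) hz he'
  rw [Prod.norm_def, le_div_iff₀ hε]
  rcases max_choice ‖x.1‖ ‖x.2‖ with h | h <;> rw [h, Real.norm_eq_abs] <;>
    rcases abs_choice x.1 with h' | h' <;> rcases abs_choice x.2 with h'' | h'' <;>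
    simp only [h', h''] <;> linarith

lemma volume_isoper (L : Set (ℝ × ℝ)) : volume (isoper L) = volume (polarDual L) := by
  let f : ℝ × ℝ →ₗ[ℝ] ℝ × ℝ :=
    Matrix.toLin (Module.Basis.finTwoProd ℝ) (Module.Basis.finTwoProd ℝ) !![0, -1; 1, 0]
  have hf : ∀ x, f x = rotHalfPi x := by
    intro x
    simp [f, rotHalfPi, Matrix.toLin_finTwoProd_apply]
  have : isoper L = f '' polarDual L := by
    rw [isoper]
    exact image_congr fun x _ => (hf x).symm
  rw [this, Measure.addHaar_image_linearMap]
  simp [f, LinearMap.det_toLin, Matrix.det_fin_two_of]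

lemma gauge_isoper_pos {L : Set (ℝ × ℝ)} (hcomp : IsCompact L) (h0 : (0 : ℝ × ℝ) ∈ interior L)
    {x : ℝ × ℝ} (hx : x ≠ 0) : 0 < gauge (isoper L) x :=
  (gauge_pos (absorbent_nhds_zero (isoper_mem_nhds hcomp))
    ((NormedSpace.isVonNBounded_iff ℝ).2 (isBounded_isoper h0))).2 hx

lemma gauge_isoper_dir_pos {L : Set (ℝ × ℝ)} (hcomp : IsCompact L)
    (h0 : (0 : ℝ × ℝ) ∈ interior L) (φ : ℝ) : 0 < gauge (isoper L) (Real.cos φ, Real.sin φ) :=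
  gauge_isoper_pos hcomp h0 (by
    intro h
    have h1 := congrArg Prod.fst h
    have h2 := congrArg Prod.snd h
    simp only [Prod.fst_zero, Prod.snd_zero] at h1 h2
    have := Real.cos_sq_add_sin_sq φ
    rw [h1, h2] at this
    norm_num at this)

lemma gauge_isoper_smul (L : Set (ℝ × ℝ)) (c : ℝ) (hc : 0 < c) (x : ℝ × ℝ) :
    gauge (isoper L) (c • x) = c * gauge (isoper L) x := by
  rw [gauge_smul_of_nonneg hc.le, smul_eq_mul]

/-- The area of the polar dual, in terms of the radial function of the isoperimetrix. -/
lemma volume_polarDual {L : Set (ℝ × ℝ)} (hcomp : IsCompact L)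
    (h0 : (0 : ℝ × ℝ) ∈ interior L) :
    (volume (polarDual L)).toReal = (1/2) * ∫ φ in -Real.pi..Real.pi,
      ((gauge (isoper L) (Real.cos φ, Real.sin φ))⁻¹) ^ 2 := by
  have hn := isoper_mem_nhds hcomp
  have e : isoper L = {x | gauge (isoper L) x ≤ 1} := by
    ext x
    rw [mem_ofPred_eq, gauge_le_one_iff_mem_closure (convex_isoper L) hn,
      (isClosed_isoper L).closure_eq]
  have hv := (congrArg volume e).trans (volume_polar (continuous_gauge (convex_isoper L) hn)
    (fun x hx => gauge_isoper_pos hcomp h0 hx) (gauge_isoper_smul L))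
  rw [← volume_isoper, hv, ENNReal.toReal_ofReal]
  have : 0 ≤ ∫ φ in -Real.pi..Real.pi, ((gauge (isoper L) (Real.cos φ, Real.sin φ))⁻¹) ^ 2 :=
    intervalIntegral.integral_nonneg (by linarith [Real.pi_pos]) fun φ _ => by positivity
  linarith

lemma volume_polarDual_pos {L : Set (ℝ × ℝ)} (hcomp : IsCompact L)
    (h0 : (0 : ℝ × ℝ) ∈ interior L) : 0 < (volume (polarDual L)).toReal := by
  rw [← volume_isoper]
  exact ENNReal.toReal_pos (Measure.measure_pos_of_mem_nhds _ (isoper_mem_nhds hcomp)).ne'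
    (isBounded_isoper h0).measure_lt_top.ne

open scoped Pointwise in
/-- Every boundary point `p` of the isoperimetrix is supported by a point of `L`: the maximum of the
linear functionals defining the isoperimetrix is attained by compactness, and were it less than `1`,
`p` would be interior. -/
lemma exists_support {L : Set (ℝ × ℝ)} (hcomp : IsCompact L) (h0 : (0 : ℝ × ℝ) ∈ interior L)
    {p : ℝ × ℝ} (hp : gauge (isoper L) p = 1) : ∃ y ∈ L, p.2 * y.1 - p.1 * y.2 = 1 := by
  obtain ⟨y, hy, hmax⟩ := hcomp.exists_isMaxOn ⟨0, interior_subset h0⟩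
    (f := fun y : ℝ × ℝ => p.2 * y.1 - p.1 * y.2) (by fun_prop)
  have hpK : p ∈ isoper L := by
    rw [← (isClosed_isoper L).closure_eq, ← gauge_le_one_iff_mem_closure (convex_isoper L)
      (isoper_mem_nhds hcomp), hp]
  refine ⟨y, hy, le_antisymm (mem_isoper.1 hpK y hy) ?_⟩
  by_contra! hlt
  -- Otherwise `p` lies in a contracted copy of the isoperimetrix.
  set m := max (p.2 * y.1 - p.1 * y.2) (1/2) with hm
  have hm0 : 0 < m := lt_max_of_lt_right (by norm_num)
  have hm1 : m < 1 := max_lt hlt (by norm_num)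
  have : p ∈ m • isoper L := by
    rw [mem_smul_set_iff_inv_smul_mem₀ hm0.ne', mem_isoper]
    intro z hz
    have h1 : p.2 * z.1 - p.1 * z.2 ≤ m := (hmax hz).trans (le_max_left _ _)
    simp only [Prod.smul_snd, Prod.smul_fst, smul_eq_mul]
    have : m⁻¹ * p.2 * z.1 - m⁻¹ * p.1 * z.2 = (p.2 * z.1 - p.1 * z.2) / m := by
      field_simp
    rw [this]
    exact (div_le_one hm0).2 h1
  have := gauge_le_of_mem hm0.le this
  linarith

/-! ### Curves along the boundary of the isoperimetrix -/

/-- The velocity of a curve running along the boundary of the isoperimetrix has `L`-norm equal to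
twice the absolute areal velocity. The point `y` of `L` supporting the isoperimetrix at `(u t, v t)`
satisfies `‖y‖_L = 1`, and the functional it defines is maximal at time `t`, which forces the
velocity to be the multiple `(v t * a - u t * b) • y`. -/
lemma gauge_velocity {L : Set (ℝ × ℝ)} (hcomp : IsCompact L) (hsym : L = -L)
    (h0 : (0 : ℝ × ℝ) ∈ interior L) {u v : ℝ → ℝ} {t a b : ℝ} (ht : t ∈ Ioo (0:ℝ) 1)
    (hg : ∀ s ∈ Icc (0:ℝ) 1, gauge (isoper L) (u s, v s) = 1)
    (hu : HasDerivAt u a t) (hv : HasDerivAt v b t) :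
    gauge L (a, b) = |u t * b - v t * a| := by
  have hmem : ∀ s ∈ Icc (0:ℝ) 1, (u s, v s) ∈ isoper L := fun s hs => by
    rw [← (isClosed_isoper L).closure_eq, ← gauge_le_one_iff_mem_closure (convex_isoper L)
      (isoper_mem_nhds hcomp), hg s hs]
  obtain ⟨y, hy, hy1⟩ := exists_support hcomp h0 (hg t (Ioo_subset_Icc_self ht))
  simp only at hy1
  have hd : HasDerivAt (fun s => v s * y.1 - u s * y.2) (b * y.1 - a * y.2) t :=
    (hv.mul_const _).sub (hu.mul_const _)
  have hz : b * y.1 - a * y.2 = 0 := by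
    refine IsLocalMax.hasDerivAt_eq_zero ?_ hd
    filter_upwards [Icc_mem_nhds ht.1 ht.2] with s hs
    rw [hy1]
    exact mem_isoper.1 (hmem s hs) y hy
  have hyg : gauge L y = 1 := by
    refine le_antisymm (gauge_le_one_of_mem hy) ?_
    by_contra! hlt
    obtain ⟨r, hr0, hr1, z, hzL, rfl⟩ := exists_lt_of_gauge_lt
      (absorbent_nhds_zero (mem_interior_iff_mem_nhds.1 h0)) hlt
    have := mem_isoper.1 (hmem t (Ioo_subset_Icc_self ht)) z hzL
    simp only [Prod.smul_snd, Prod.smul_fst, smul_eq_mul] at this hy1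
    nlinarith
  have hneg : ∀ x, gauge L (-x) = gauge L x := gauge_neg fun x hx => by
    rw [hsym] at hx
    exact hx
  set c := v t * a - u t * b with hc
  have e : (a, b) = c • y := by
    ext
    · simp only [Prod.smul_fst, smul_eq_mul, hc]
      linear_combination (-a) * hy1 + u t * hz
    · simp only [Prod.smul_snd, smul_eq_mul, hc]
      linear_combination (-b) * hy1 + v t * hz
  have e2 : u t * b - v t * a = -c := by rw [hc]; ring
  rw [e2, abs_neg, e]
  rcases le_total 0 c with h | h
  · rw [gauge_smul_of_nonneg h, hyg, abs_of_nonneg h]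
    simp
  · rw [← hneg, ← neg_smul, gauge_smul_of_nonneg (neg_nonneg.2 h), hyg, abs_of_nonpos h]
    simp

/-- A closed curve running once along the boundary of the isoperimetrix has `L`-length twice the
area of the polar dual, and encloses that area. By `gauge_velocity` the integrand of the length is
the absolute value of `ω = u v' - v u'`; by `winding` the sign `σ` of `ω` is constant; and `ω` is
`R(θ) θ'`, where `R` is the squared radial function, whose integral over a full turn is given by
`volume_polarDual`. -/
theorem isoperimetrix_core {L : Set (ℝ × ℝ)} (hcomp : IsCompact L) (hsym : L = -L)
    (h0 : (0 : ℝ × ℝ) ∈ interior L) (γ : ACCurve) (hcl : γ.toFun 0 = γ.toFun 1)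
    (hinj : InjOn γ.toFun (Ico (0:ℝ) 1))
    (hfr : ∀ t ∈ Icc (0:ℝ) 1, γ.toFun t ∈ frontier (isoper L)) :
    γ.length L = 2 * (volume (polarDual L)).toReal ∧
      |γ.area| = (volume (polarDual L)).toReal := by
  have hI : uIcc (0:ℝ) 1 = Icc 0 1 := uIcc_of_le zero_le_one
  set du : ℝ → ℝ := fun t => (γ.deriv t).1 with hdu
  set dv : ℝ → ℝ := fun t => (γ.deriv t).2 with hdv
  have hdui : IntervalIntegrable du volume 0 1 := ⟨γ.integrable.1.fst, γ.integrable.2.fst⟩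
  have hdvi : IntervalIntegrable dv volume 0 1 := ⟨γ.integrable.1.snd, γ.integrable.2.snd⟩
  set u : ℝ → ℝ := fun t => (γ.toFun 0).1 + ∫ s in (0:ℝ)..t, du s with hu
  set v : ℝ → ℝ := fun t => (γ.toFun 0).2 + ∫ s in (0:ℝ)..t, dv s with hv
  have hγ : ∀ t ∈ Icc (0:ℝ) 1, γ.toFun t = (u t, v t) := by
    intro t ht
    have hit : IntervalIntegrable γ.deriv volume 0 t := γ.integrable.mono_set (by
      rw [hI, uIcc_of_le ht.1]
      exact Icc_subset_Icc le_rfl ht.2)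
    rw [γ.integral_eq t ht]
    ext
    · have := (ContinuousLinearMap.fst ℝ ℝ ℝ).intervalIntegral_comp_comm hit
      simp only [ContinuousLinearMap.coe_fst'] at this
      simp only [Prod.fst_add, hu, hdu, this]
    · have := (ContinuousLinearMap.snd ℝ ℝ ℝ).intervalIntegral_comp_comm hit
      simp only [ContinuousLinearMap.coe_snd'] at this
      simp only [Prod.snd_add, hv, hdv, this]
  have hn := isoper_mem_nhds hcomp
  have hg : ∀ t ∈ Icc (0:ℝ) 1, gauge (isoper L) (u t, v t) = 1 := fun t ht => by
    rw [gauge_eq_one_iff_mem_frontier (convex_isoper L) hn, ← hγ t ht]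
    exact hfr t ht
  have hu' : ∀ t, u t = u 0 + ∫ s in (0:ℝ)..t, du s := fun t => by simp [hu]
  have hv' : ∀ t, v t = v 0 + ∫ s in (0:ℝ)..t, dv s := fun t => by simp [hv]
  obtain ⟨hua, hud⟩ := ac_of_primitive hdui hu'
  obtain ⟨hva, hvd⟩ := ac_of_primitive hdvi hv'
  have hne : ∀ t ∈ Icc (0:ℝ) 1, 0 < u t ^ 2 + v t ^ 2 := by
    intro t ht
    by_contra! h
    have h1 : u t = 0 := by nlinarith [sq_nonneg (u t), sq_nonneg (v t)]
    have h2 : v t = 0 := by nlinarith [sq_nonneg (u t), sq_nonneg (v t)]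
    have := hg t ht
    rw [h1, h2, show ((0:ℝ), (0:ℝ)) = 0 from rfl, gauge_zero] at this
    norm_num at this
  obtain ⟨θ, ρ, hθa, hρ, hθd⟩ := polar_lift hdui hdvi hu' hv' hne
  set G : ℝ → ℝ := fun φ => gauge (isoper L) (Real.cos φ, Real.sin φ) with hG
  have hρG : ∀ t ∈ Icc (0:ℝ) 1, ρ t = (G (θ t))⁻¹ := by
    intro t ht
    obtain ⟨h1, h2, h3⟩ := hρ t ht
    have h4 := hg t ht
    rw [h2, h3, show (ρ t * Real.cos (θ t), ρ t * Real.sin (θ t))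
      = ρ t • (Real.cos (θ t), Real.sin (θ t)) from rfl, gauge_isoper_smul L _ h1] at h4
    exact eq_inv_of_mul_eq_one_left h4
  have hθc : ContinuousOn θ (Icc 0 1) := hI ▸ hθa.continuousOn
  -- Points of the boundary are determined by their direction.
  have hdir : ∀ s ∈ Icc (0:ℝ) 1, ∀ t ∈ Icc (0:ℝ) 1, Real.cos (θ s) = Real.cos (θ t) →
      Real.sin (θ s) = Real.sin (θ t) → γ.toFun s = γ.toFun t := by
    intro s hs t ht h1 h2
    have : ρ s = ρ t := by simp only [hρG s hs, hρG t ht, hG, h1, h2]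
    rw [hγ s hs, hγ t ht, (hρ s hs).2.1, (hρ s hs).2.2, (hρ t ht).2.1, (hρ t ht).2.2, h1, h2, this]
  have h01 : (0:ℝ) ∈ Icc (0:ℝ) 1 := by simp
  have h11 : (1:ℝ) ∈ Icc (0:ℝ) 1 := by simp
  have hends : Real.cos (θ 0) = Real.cos (θ 1) ∧ Real.sin (θ 0) = Real.sin (θ 1) := by
    obtain ⟨a0, a1, a2⟩ := hρ 0 h01
    obtain ⟨b0, b1, b2⟩ := hρ 1 h11
    have := hcl
    rw [hγ 0 h01, hγ 1 h11, Prod.mk.injEq, a1, a2, b1, b2] at this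
    obtain ⟨e1, e2⟩ := this
    have hsq : ρ 0 ^ 2 = ρ 1 ^ 2 := by
      linear_combination (ρ 0 * Real.cos (θ 0) + ρ 1 * Real.cos (θ 1)) * e1
        + (ρ 0 * Real.sin (θ 0) + ρ 1 * Real.sin (θ 1)) * e2
        - ρ 0 ^ 2 * Real.cos_sq_add_sin_sq (θ 0) + ρ 1 ^ 2 * Real.cos_sq_add_sin_sq (θ 1)
    have hr : ρ 0 = ρ 1 := by
      rwa [pow_left_inj₀ a0.le b0.le (by norm_num)] at hsq
    rw [hr] at e1 e2
    exact ⟨mul_left_cancel₀ b0.ne' e1, mul_left_cancel₀ b0.ne' e2⟩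
  obtain ⟨σ, hσ, hmono, hθ1⟩ := winding hθc
    (fun s hs t ht h1 h2 => hinj hs ht
      (hdir s (Ico_subset_Icc_self hs) t (Ico_subset_Icc_self ht) h1 h2)) hends.1 hends.2
  have hσ2 : σ * σ = 1 := by rcases hσ with rfl | rfl <;> norm_num
  have hσa : |σ| = 1 := by rcases hσ with rfl | rfl <;> simp
  have hGpos : ∀ φ, 0 < G φ := fun φ => gauge_isoper_dir_pos hcomp h0 φ
  set R : ℝ → ℝ := fun φ => ((G φ)⁻¹) ^ 2 with hR
  have hRc : Continuous R :=
    (((continuous_gauge (convex_isoper L) hn).comp (by fun_prop)).inv₀ fun φ => (hGpos φ).ne').pow 2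
  have hRper : Function.Periodic R (2 * Real.pi) := fun φ => by
    simp only [hR, hG, Real.cos_add_two_pi, Real.sin_add_two_pi]
  set F : ℝ → ℝ := fun φ => ∫ s in (0:ℝ)..φ, R s with hF
  have hFd : ∀ φ, HasDerivAt F (R φ) φ := fun φ => hRc.integral_hasStrictDerivAt 0 φ |>.hasDerivAt
  have hF1 : ContDiff ℝ 1 F := contDiff_one_iff_deriv.2
    ⟨fun φ => (hFd φ).differentiableAt, by rwa [funext fun φ => (hFd φ).deriv]⟩
  set ω : ℝ → ℝ := fun t => u t * dv t - v t * du t with hω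
  have hFθ : ∫ t in (0:ℝ)..1, ω t = F (θ 1) - F (θ 0) := by
    rw [← (ac_comp_contDiff hθa hF1).integral_deriv_eq_sub]
    refine intervalIntegral.integral_congr_ae ?_
    filter_upwards [hθd] with t ht ht'
    have ht2 : t ∈ Icc (0:ℝ) 1 := hI ▸ uIoc_subset_uIcc ht'
    have := ((hFd (θ t)).comp t (ht ht2)).deriv
    simp only [Function.comp_def] at this
    obtain ⟨h1, h2, h3⟩ := hρ t ht2
    have hnn : u t ^ 2 + v t ^ 2 = ρ t ^ 2 := by
      rw [h2, h3]
      linear_combination ρ t ^ 2 * Real.cos_sq_add_sin_sq (θ t)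
    rw [this, hnn, hR]
    simp only
    rw [← hρG t ht2, mul_div_cancel₀ _ (by positivity)]
  have hint : ∫ t in (0:ℝ)..1, ω t = σ * (2 * (volume (polarDual L)).toReal) := by
    have hii : ∀ a b, IntervalIntegrable R volume a b := fun a b => hRc.intervalIntegrable a b
    have hp : ∀ a, ∫ φ in a..a + 2 * Real.pi, R φ = 2 * (volume (polarDual L)).toReal := by
      intro a
      rw [volume_polarDual hcomp h0, hRper.intervalIntegral_add_eq a (-Real.pi),
        show -Real.pi + 2 * Real.pi = Real.pi by ring]
      ring
    rw [hFθ, hF]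
    simp only
    rw [intervalIntegral.integral_interval_sub_left (hii _ _) (hii _ _)]
    rcases hσ with rfl | rfl
    · rw [hθ1, one_mul, one_mul, hp]
    · rw [← hp (θ 1), intervalIntegral.integral_symm, neg_one_mul, show θ 1 + 2 * Real.pi = θ 0 by
        rw [hθ1]; ring]
  have hV := (volume_polarDual_pos hcomp h0).le
  constructor
  · rw [ACCurve.length]
    have : ∫ t in (0:ℝ)..1, gauge L (γ.deriv t) = ∫ t in (0:ℝ)..1, σ * ω t := by
      refine intervalIntegral.integral_congr_ae ?_
      have h1ne : ∀ᵐ t : ℝ, t ≠ 1 := by simp [ae_iff, measure_singleton]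
      filter_upwards [hud, hvd, hθd, h1ne] with t h1 h2 h3 h4 h5
      rw [uIoc_of_le zero_le_one] at h5
      have ht : t ∈ Ioo (0:ℝ) 1 := ⟨h5.1, lt_of_le_of_ne h5.2 h4⟩
      have ht' := Ioo_subset_Icc_self ht
      have e := gauge_velocity hcomp hsym h0 ht hg (h1 ht') (h2 ht')
      -- Monotonicity of the angle fixes the sign of the areal velocity.
      have hpos : 0 ≤ σ * ω t := by
        have hd := ((h3 ht').const_mul σ)
        have := hmono.derivWithin_nonneg (x := t)
        rw [derivWithin_of_mem_nhds (Ioo_mem_nhds ht.1 ht.2), hd.deriv, ← mul_div_assoc] at this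
        have hn := hne t ht'
        have h := mul_nonneg this hn.le
        rwa [div_mul_cancel₀ _ hn.ne'] at h
      rw [show γ.deriv t = (du t, dv t) from rfl, e, show u t * dv t - v t * du t = ω t from rfl,
        ← abs_of_nonneg hpos, abs_mul, hσa, one_mul]
    rw [this, intervalIntegral.integral_const_mul, hint, ← mul_assoc, hσ2, one_mul]
  · have : γ.area = (1/2) * ∫ t in (0:ℝ)..1, ω t := by
      rw [ACCurve.area]
      congr 1
      refine intervalIntegral.integral_congr fun t ht => ?_
      rw [hI] at ht
      simp only [hγ t ht, hω, hdu, hdv]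
    rw [this, hint, abs_mul, abs_mul, hσa, abs_of_nonneg (mul_nonneg zero_le_two hV),
      abs_of_pos (by norm_num : (0:ℝ) < 1/2)]
    ring

/-! ### Existence of a parametrization -/

/-- A curve with absolutely continuous coordinates `u` and `v`, with its derivative taken
coordinatewise. -/
lemma exists_curve_of_ac {u v : ℝ → ℝ} (hu : AbsolutelyContinuousOnInterval u 0 1)
    (hv : AbsolutelyContinuousOnInterval v 0 1) :
    ∃ γ : ACCurve, ∀ t, γ.toFun t = (u t, v t) := by
  have hi : ∀ t ∈ Icc (0:ℝ) 1, IntervalIntegrable (fun t => (deriv u t, deriv v t)) volume 0 t := by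
    intro t ht
    have hs : uIcc 0 t ⊆ uIcc (0:ℝ) 1 := by
      rw [uIcc_of_le zero_le_one, uIcc_of_le ht.1]
      exact Icc_subset_Icc le_rfl ht.2
    have h1 := (hu.mono hs).intervalIntegrable_deriv
    have h2 := (hv.mono hs).intervalIntegrable_deriv
    exact ⟨h1.1.prodMk h2.1, h1.2.prodMk h2.2⟩
  refine ⟨⟨fun t => (u t, v t), fun t => (deriv u t, deriv v t), hi 1 (by simp), ?_⟩, fun t => rfl⟩
  intro t ht
  have hs : uIcc 0 t ⊆ uIcc (0:ℝ) 1 := by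
    rw [uIcc_of_le zero_le_one, uIcc_of_le ht.1]
    exact Icc_subset_Icc le_rfl ht.2
  have h1 := (hu.mono hs).integral_deriv_eq_sub
  have h2 := (hv.mono hs).integral_deriv_eq_sub
  ext
  · have := (ContinuousLinearMap.fst ℝ ℝ ℝ).intervalIntegral_comp_comm (hi t ht)
    simp only [ContinuousLinearMap.coe_fst'] at this
    simp only [Prod.fst_add, ← this, h1]
    ring
  · have := (ContinuousLinearMap.snd ℝ ℝ ℝ).intervalIntegral_comp_comm (hi t ht)
    simp only [ContinuousLinearMap.coe_snd'] at this
    simp only [Prod.snd_add, ← this, h2]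
    ring

/-- Parametrization of the boundary of the isoperimetrix by rescaled polar angle. It is absolutely
continuous because the gauge is Lipschitz and bounded below on the unit circle. -/
lemma exists_parametrization {L : Set (ℝ × ℝ)} (hcomp : IsCompact L)
    (h0 : (0 : ℝ × ℝ) ∈ interior L) :
    ∃ γ : ACCurve, γ.toFun 0 = γ.toFun 1 ∧ InjOn γ.toFun (Ico (0:ℝ) 1) ∧
      ∀ t ∈ Icc (0:ℝ) 1, γ.toFun t ∈ frontier (isoper L) := by
  have hn := isoper_mem_nhds hcomp
  have hpi := Real.pi_pos
  set c : ℝ → ℝ := fun t => Real.cos (2 * Real.pi * t) with hc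
  set s : ℝ → ℝ := fun t => Real.sin (2 * Real.pi * t) with hs
  have hcd : ContDiff ℝ 1 c := Real.contDiff_cos.comp (by fun_prop)
  have hsd : ContDiff ℝ 1 s := Real.contDiff_sin.comp (by fun_prop)
  set G : ℝ → ℝ := fun t => gauge (isoper L) (c t, s t) with hG
  have hGpos : ∀ t, 0 < G t := fun t => gauge_isoper_dir_pos hcomp h0 _
  have hGa : AbsolutelyContinuousOnInterval G 0 1 := by
    obtain ⟨K, hK⟩ := (convex_isoper L).lipschitz_gauge hn
    obtain ⟨M, hM⟩ := (hcd.prodMk hsd).contDiffOn.exists_lipschitzOnWith (by decide)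
      (convex_uIcc (𝕜 := ℝ) (0:ℝ) 1) isCompact_uIcc
    exact (hK.comp_lipschitzOnWith hM).absolutelyContinuousOnInterval
  have hRa : AbsolutelyContinuousOnInterval (fun t => (G t)⁻¹) 0 1 := by
    refine ac_comp (g := fun x => x⁻¹) hGa (contDiffOn_id.inv ?_)
    rintro _ ⟨t, _, rfl⟩
    exact (hGpos t).ne'
  have hca : AbsolutelyContinuousOnInterval c 0 1 := hcd.contDiffOn.absolutelyContinuousOnInterval
  have hsa : AbsolutelyContinuousOnInterval s 0 1 := hsd.contDiffOn.absolutelyContinuousOnInterval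
  obtain ⟨γ, hγ⟩ := exists_curve_of_ac (hRa.fun_mul hca) (hRa.fun_mul hsa)
  refine ⟨γ, ?_, ?_, ?_⟩
  · simp [hγ, hG, hc, hs]
  · intro x hx y hy h
    rw [hγ, hγ, Prod.mk.injEq] at h
    obtain ⟨e1, e2⟩ := h
    have px := inv_pos.2 (hGpos x)
    have py := inv_pos.2 (hGpos y)
    have cx : c x ^ 2 + s x ^ 2 = 1 := Real.cos_sq_add_sin_sq _
    have cy : c y ^ 2 + s y ^ 2 = 1 := Real.cos_sq_add_sin_sq _
    have hsq : (G x)⁻¹ ^ 2 = (G y)⁻¹ ^ 2 := by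
      linear_combination ((G x)⁻¹ * c x + (G y)⁻¹ * c y) * e1
        + ((G x)⁻¹ * s x + (G y)⁻¹ * s y) * e2 - (G x)⁻¹ ^ 2 * cx + (G y)⁻¹ ^ 2 * cy
    rw [pow_left_inj₀ px.le py.le (by norm_num)] at hsq
    rw [hsq] at e1 e2
    obtain ⟨k, hk⟩ := Real.Angle.angle_eq_iff_two_pi_dvd_sub.1
      (Real.Angle.cos_sin_inj (mul_left_cancel₀ py.ne' e1) (mul_left_cancel₀ py.ne' e2))
    have hk' : x - y = k := by
      have : 2 * Real.pi * (x - y) = 2 * Real.pi * k := by linarith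
      exact mul_left_cancel₀ (by positivity) this
    have k1 : (k:ℝ) < 1 := by linarith [hx.2, hy.1]
    have k2 : (-1:ℝ) < k := by linarith [hx.1, hy.2]
    have k3 : k = 0 := by
      have : k < 1 := by exact_mod_cast k1
      have : -1 < k := by exact_mod_cast k2
      omega
    rw [k3] at hk'
    push_cast at hk'
    linarith
  · intro t _
    rw [← gauge_eq_one_iff_mem_frontier (convex_isoper L) hn, hγ,
      show ((G t)⁻¹ * c t, (G t)⁻¹ * s t) = (G t)⁻¹ • (c t, s t) from rfl,
      gauge_isoper_smul L _ (inv_pos.2 (hGpos t))]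
    exact inv_mul_cancel₀ (hGpos t).ne'

/-- The isoperimetrix achieves equality in Busemann's isoperimetric inequality: there is a
closed absolutely continuous curve with nonzero area and `‖γ‖_L² = 4 · vol(L*) · |A(γ)|`;
in fact any (injective) parametrization of the boundary of the rotation by `π/2` of the
polar dual `L*` achieves this equality. -/
theorem busemann_isoperimetric_equality (L : Set (ℝ × ℝ))
    (hcomp : IsCompact L) (hconv : Convex ℝ L) (hsym : L = -L)
    (h0 : (0 : ℝ × ℝ) ∈ interior L) :
    (∃ γ : ACCurve, γ.toFun 0 = γ.toFun 1 ∧ γ.area ≠ 0 ∧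
      (γ.length L)^2 = 4 * (volume (polarDual L)).toReal * |γ.area|) ∧
    (∀ γ : ACCurve, γ.toFun 0 = γ.toFun 1 →
      Set.InjOn γ.toFun (Set.Ico (0:ℝ) 1) →
      γ.toFun '' Set.Icc (0:ℝ) 1 = frontier (rotHalfPi '' polarDual L) →
      (γ.length L)^2 = 4 * (volume (polarDual L)).toReal * |γ.area|) := by
  constructor
  · obtain ⟨γ, hcl, hinj, hfr⟩ := exists_parametrization hcomp h0
    obtain ⟨hlen, harea⟩ := isoperimetrix_core hcomp hsym h0 γ hcl hinj hfr
    refine ⟨γ, hcl, ?_, ?_⟩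
    · rw [← abs_pos, harea]
      exact volume_polarDual_pos hcomp h0
    · rw [hlen, harea]
      ring
  · intro γ hcl hinj himg
    obtain ⟨hlen, harea⟩ := isoperimetrix_core hcomp hsym h0 γ hcl hinj
      fun t ht => himg ▸ Set.mem_image_of_mem γ.toFun ht
    rw [hlen, harea]
    ring
end
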